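/- Let n ≥ 3 be an integer and let G be the grid P_n □ P_3. Then the strong convexity spectrum of G equals S_SC(G) = {k ∈ ℤ : 1 ≤ k ≤ 3n−3} \ {2, 3, 5, 7}. -/

import Mathlib

/-!  Common definitions: oriented graphs, geodesic convexity, convexity number,
strong convexity spectrum, and grid graphs. -/

variable {V : Type*}

/-- A directed walk of length `k` from `u` to `v` along the arc relation `A`,
encoded by the function `f` listing its vertices. -/
def IsDirWalk (A : V → V → Prop) (k : ℕ) (f : ℕ → V) (u v : V) : Prop :=
  f 0 = u ∧ f k = v ∧ ∀ i, i < k → A (f i) (f (i + 1))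

/-- There is a directed walk from `u` to `v`. -/
def DirReachable (A : V → V → Prop) (u v : V) : Prop :=
  ∃ k f, IsDirWalk A k f u v

/-- A digraph (given by its arc relation) is strongly connected. -/
def StrongConnected (A : V → V → Prop) : Prop :=
  ∀ u v : V, DirReachable A u v

/-- A `uv`-geodesic: a directed walk from `u` to `v` of minimum possible length
(such a walk is automatically a directed path). -/
def IsGeodesic (A : V → V → Prop) (k : ℕ) (f : ℕ → V) (u v : V) : Prop :=
  IsDirWalk A k f u v ∧ ∀ k' f', IsDirWalk A k' f' u v → k ≤ k'

/-- A nonempty vertex set `C` is convex if every vertex lying on a geodesic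
between two vertices of `C` (in either direction) belongs to `C`. -/
def DConvex (A : V → V → Prop) (C : Set V) : Prop :=
  C.Nonempty ∧ ∀ u ∈ C, ∀ v ∈ C, ∀ k f, IsGeodesic A k f u v → ∀ i ≤ k, f i ∈ C

/-- `A` is an orientation of the simple graph `G`: every arc is along an edge,
every edge gets an arc, and no edge gets both directions. -/
def IsOrientation (G : SimpleGraph V) (A : V → V → Prop) : Prop :=
  (∀ x y, A x y → G.Adj x y) ∧ (∀ x y, G.Adj x y → A x y ∨ A y x) ∧
    (∀ x y, A x y → ¬ A y x)

/-- The convexity number of a digraph: the maximum cardinality of a proper convex set. -/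
noncomputable def convexityNumber [Fintype V] (A : V → V → Prop) : ℕ :=
  sSup {k | ∃ C : Set V, DConvex A C ∧ C ≠ Set.univ ∧ C.ncard = k}

/-- The strong convexity spectrum of a graph: the set of convexity numbers of
its strongly connected orientations. -/
def strongConvexitySpectrum [Fintype V] (G : SimpleGraph V) : Set ℕ :=
  {k | ∃ A : V → V → Prop, IsOrientation G A ∧ StrongConnected A ∧ convexityNumber A = k}

/-- The grid graph `P_n □ P_m`. -/
def gridGraph (n m : ℕ) : SimpleGraph (Fin n × Fin m) :=
  (SimpleGraph.pathGraph n).boxProd (SimpleGraph.pathGraph m)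

/-!
A grid is bipartite, so the parity of the distance between two vertices depends only on their
colours. Hence a convex set contains each directed path of length two between two of its vertices,
and each directed path of length three whose first vertex has no arc to the last; in particular it
contains a directed 4-cycle as soon as it contains one of its arcs. This forces a proper convex set
to miss at least three vertices. A convex set with at least two vertices induces a strong digraph,
so that every vertex has degree at least two in it and consecutive rows share at least two columns;
this excludes `2`, `3` and `5` vertices. With `7` vertices the set occupies three rows, the middle
one full, and adding all rows on one side keeps it convex and proper.

For the other inclusion, fold the grid with one more row onto the old grid and pull the orientation
back. If the end row is joined to its neighbour by directed 4-cycles, both rows lying inside or both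
outside a dominant set (a strengthened form of a maximum proper convex set), then the preimage of
that set is again dominant, with `3` or `0` more vertices. All values then come from ten
orientations of small grids, which are checked by computation.
-/

namespace IsOrientation

variable {G : SimpleGraph V} {A : V → V → Prop} {x y : V}

theorem adj (hA : IsOrientation G A) (h : A x y) : G.Adj x y :=
  hA.1 x y h

theorem arc_or_arc (hA : IsOrientation G A) (h : G.Adj x y) : A x y ∨ A y x :=
  hA.2.1 x y h

theorem asymm (hA : IsOrientation G A) (h : A x y) : ¬ A y x :=
  hA.2.2 x y h

end IsOrientation

section DirDist

variable {A : V → V → Prop} {u v w x y : V} {k l : ℕ} {f g : ℕ → V}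

theorem isDirWalk_refl (A : V → V → Prop) (u : V) : IsDirWalk A 0 (fun _ => u) u u :=
  ⟨rfl, rfl, fun _ hi => absurd hi (Nat.not_lt_zero _)⟩

theorem IsDirWalk.cons (huv : A u v) (hf : IsDirWalk A k f v w) :
    IsDirWalk A (k + 1) (fun | 0 => u | i + 1 => f i) u w := by
  refine ⟨rfl, hf.2.1, fun i hi => ?_⟩
  cases i with
  | zero => exact (congrArg (A u) hf.1).mpr huv
  | succ i => exact hf.2.2 i (by omega)

theorem IsDirWalk.tail (hf : IsDirWalk A (k + 1) f u v) :
    A u (f 1) ∧ IsDirWalk A k (fun i => f (i + 1)) (f 1) v :=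
  ⟨hf.1 ▸ hf.2.2 0 (by omega), rfl, hf.2.1, fun i hi => hf.2.2 (i + 1) (by omega)⟩

theorem IsDirWalk.append (hf : IsDirWalk A k f u v) (hg : IsDirWalk A l g v w) :
    ∃ h, IsDirWalk A (k + l) h u w ∧ h k = v := by
  induction k generalizing u f with
  | zero => exact ⟨g, by rwa [zero_add, ← hf.1, hf.2.1], hg.1⟩
  | succ k ih =>
    obtain ⟨h, hh, hv⟩ := ih hf.tail.2
    exact ⟨_, by simpa only [Nat.add_right_comm] using hh.cons hf.tail.1, hv⟩

theorem IsDirWalk.take (hf : IsDirWalk A k f u v) {i : ℕ} (hi : i ≤ k) :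
    IsDirWalk A i f u (f i) :=
  ⟨hf.1, rfl, fun j hj => hf.2.2 j (by omega)⟩

theorem IsDirWalk.drop (hf : IsDirWalk A k f u v) {i : ℕ} (hi : i ≤ k) :
    IsDirWalk A (k - i) (fun j => f (i + j)) (f i) v :=
  ⟨rfl, (congrArg f (Nat.add_sub_cancel' hi)).trans hf.2.1, fun j hj => hf.2.2 (i + j) (by omega)⟩

theorem IsDirWalk.map {W : Type*} {B : W → W → Prop} {φ : V → W}
    (hφ : ∀ x y, A x y → B (φ x) (φ y)) (hf : IsDirWalk A k f u v) :
    IsDirWalk B k (φ ∘ f) (φ u) (φ v) :=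
  ⟨congrArg φ hf.1, congrArg φ hf.2.1, fun i hi => hφ _ _ (hf.2.2 i hi)⟩

theorem DirReachable.refl (A : V → V → Prop) (u : V) : DirReachable A u u :=
  ⟨0, _, isDirWalk_refl A u⟩

theorem DirReachable.head (huv : A u v) (hvw : DirReachable A v w) : DirReachable A u w := by
  obtain ⟨k, f, hf⟩ := hvw
  exact ⟨_, _, hf.cons huv⟩

theorem DirReachable.of_arc (huv : A u v) : DirReachable A u v :=
  .head huv (.refl A v)

theorem DirReachable.trans (huv : DirReachable A u v) (hvw : DirReachable A v w) :
    DirReachable A u w := by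
  obtain ⟨k, f, hf⟩ := huv
  obtain ⟨l, g, hg⟩ := hvw
  obtain ⟨h, hh, -⟩ := hf.append hg
  exact ⟨_, _, hh⟩

/-- The distance from `u` to `v` in a digraph: the least length of a directed walk, with the junk
value `0` when there is none. -/
noncomputable def dirDist (A : V → V → Prop) (u v : V) : ℕ :=
  sInf {k | ∃ f, IsDirWalk A k f u v}

theorem IsDirWalk.dirDist_le (hf : IsDirWalk A k f u v) : dirDist A u v ≤ k :=
  Nat.sInf_le ⟨f, hf⟩

theorem dirDist_self (A : V → V → Prop) (u : V) : dirDist A u u = 0 :=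
  Nat.le_zero.mp (isDirWalk_refl A u).dirDist_le

theorem dirDist_le_one (huv : A u v) : dirDist A u v ≤ 1 :=
  ((isDirWalk_refl A v).cons huv).dirDist_le

namespace StrongConnected

variable (hs : StrongConnected A)
include hs

theorem exists_isDirWalk_dirDist (u v : V) : ∃ f, IsDirWalk A (dirDist A u v) f u v :=
  Nat.sInf_mem (s := {k | ∃ f, IsDirWalk A k f u v}) (hs u v)

theorem dirDist_triangle (u v w : V) :
    dirDist A u w ≤ dirDist A u v + dirDist A v w := by
  obtain ⟨f, hf⟩ := hs.exists_isDirWalk_dirDist u v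
  obtain ⟨g, hg⟩ := hs.exists_isDirWalk_dirDist v w
  obtain ⟨h, hh, -⟩ := hf.append hg
  exact hh.dirDist_le

theorem dirDist_map_le {W : Type*} {B : W → W → Prop} {φ : V → W}
    (hφ : ∀ x y, A x y → B (φ x) (φ y)) (u v : V) : dirDist B (φ u) (φ v) ≤ dirDist A u v :=
  let ⟨_, hf⟩ := hs.exists_isDirWalk_dirDist u v
  (hf.map hφ).dirDist_le

theorem dirDist_eq_zero_iff : dirDist A u v = 0 ↔ u = v := by
  refine ⟨fun h => ?_, fun h => h ▸ dirDist_self A u⟩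
  obtain ⟨f, hf⟩ := hs.exists_isDirWalk_dirDist u v
  rw [h] at hf
  exact hf.1.symm.trans hf.2.1

theorem arc_of_dirDist_eq_one (h : dirDist A u v = 1) : A u v := by
  obtain ⟨f, hf⟩ := hs.exists_isDirWalk_dirDist u v
  rw [h] at hf
  have := hf.2.2 0 one_pos
  rwa [hf.1, hf.2.1] at this

theorem exists_arc_dirDist_succ (huv : u ≠ v) :
    ∃ x, A u x ∧ dirDist A x v + 1 = dirDist A u v := by
  obtain ⟨f, hf⟩ := hs.exists_isDirWalk_dirDist u v
  obtain ⟨k, hk⟩ := Nat.exists_eq_succ_of_ne_zero (mt hs.dirDist_eq_zero_iff.mp huv)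
  rw [hk] at hf
  have hle := hf.tail.2.dirDist_le
  have htri := hs.dirDist_triangle u (f 1) v
  have hone := dirDist_le_one hf.tail.1
  exact ⟨f 1, hf.tail.1, by omega⟩

theorem even_dirDist_iff {G : SimpleGraph V} (κ : G.Coloring Bool) (hA : IsOrientation G A)
    (u v : V) : Even (dirDist A u v) ↔ κ u = κ v := by
  induction h : dirDist A u v generalizing u with
  | zero => simp [hs.dirDist_eq_zero_iff.mp h]
  | succ k ih =>
    have huv : u ≠ v := fun huv => by simp [hs.dirDist_eq_zero_iff.mpr huv] at h
    obtain ⟨x, hux, hx⟩ := hs.exists_arc_dirDist_succ huv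
    rw [Nat.even_add_one, ih x (by omega), Bool.eq_not.mpr (κ.valid (hA.adj hux))]
    cases κ x <;> cases κ v <;> decide

theorem exists_crossing_arc {T : Set V} (hu : u ∈ T) (hv : v ∉ T) :
    ∃ a b, a ∈ T ∧ b ∉ T ∧ A a b ∧ dirDist A u a + 1 + dirDist A b v = dirDist A u v := by
  induction h : dirDist A u v generalizing u with
  | zero => exact absurd (hs.dirDist_eq_zero_iff.mp h ▸ hu) hv
  | succ k ih =>
    obtain ⟨x, hux, hx⟩ := hs.exists_arc_dirDist_succ (ne_of_mem_of_not_mem hu hv)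
    by_cases hxT : x ∈ T
    · obtain ⟨a, b, ha, hb, hab, hd⟩ := ih hxT (by omega)
      have htri₁ := hs.dirDist_triangle u x a
      have htri₂ := hs.dirDist_triangle u a v
      have htri₃ := hs.dirDist_triangle a b v
      have hone₁ := dirDist_le_one hux
      have hone₂ := dirDist_le_one hab
      exact ⟨a, b, ha, hb, hab, by omega⟩
    · exact ⟨u, x, hu, hxT, hux, by rw [dirDist_self]; omega⟩

theorem isGeodesic_iff : IsGeodesic A k f u v ↔ IsDirWalk A k f u v ∧ k = dirDist A u v := by
  refine ⟨fun hf => ⟨hf.1, ?_⟩, fun ⟨hf, hk⟩ => ⟨hf, fun _ _ hg => hk ▸ hg.dirDist_le⟩⟩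
  obtain ⟨g, hg⟩ := hs.exists_isDirWalk_dirDist u v
  exact le_antisymm (hf.2 _ _ hg) hf.1.dirDist_le

theorem dConvex_iff {C : Set V} : DConvex A C ↔ C.Nonempty ∧ ∀ u ∈ C, ∀ v ∈ C, ∀ x,
    dirDist A u x + dirDist A x v = dirDist A u v → x ∈ C := by
  refine and_congr_right fun _ => forall₄_congr fun u _ v _ => ⟨fun h x hx => ?_, ?_⟩
  · obtain ⟨f, hf⟩ := hs.exists_isDirWalk_dirDist u x
    obtain ⟨g, hg⟩ := hs.exists_isDirWalk_dirDist x v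
    obtain ⟨p, hp, hpx⟩ := hf.append hg
    have hmem := h _ _ (hs.isGeodesic_iff.mpr ⟨hp, hx⟩) _ (Nat.le_add_right _ _)
    rwa [hpx] at hmem
  · intro h k f hf i hi
    obtain ⟨hw, rfl⟩ := hs.isGeodesic_iff.mp hf
    have hle₁ := (hw.take hi).dirDist_le
    have hle₂ := (hw.drop hi).dirDist_le
    have htri := hs.dirDist_triangle u (f i) v
    exact h _ (by omega)

end StrongConnected

end DirDist

section Convexity

variable {G : SimpleGraph V} {A : V → V → Prop} {C T : Set V} {u v w x y : V}

/-- `u → v → w → x → u` is a directed 4-cycle. -/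
structure IsDirSquare (A : V → V → Prop) (u v w x : V) : Prop where
  arc₁ : A u v
  arc₂ : A v w
  arc₃ : A w x
  arc₄ : A x u

theorem IsDirSquare.rotate (h : IsDirSquare A u v w x) : IsDirSquare A v w x u :=
  ⟨h.arc₂, h.arc₃, h.arc₄, h.arc₁⟩

theorem dConvex_singleton (hs : StrongConnected A) (u : V) : DConvex A {u} := by
  refine hs.dConvex_iff.mpr ⟨Set.singleton_nonempty u, ?_⟩
  rintro _ rfl _ rfl x hx
  rw [dirDist_self, Nat.add_eq_zero_iff] at hx
  exact hs.dirDist_eq_zero_iff.mp hx.2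

/-- A geodesic that leaves `T` and comes back contains a geodesic between the tail of an arc leaving
`T` and the head of an arc entering `T`. -/
theorem dConvex_of_boundary (hs : StrongConnected A) (hT : T.Nonempty)
    (h : ∀ a a' b' b, a ∈ T → a' ∉ T → A a a' → b' ∉ T → b ∈ T → A b' b →
      ∀ x, dirDist A a x + dirDist A x b = dirDist A a b → x ∈ T) : DConvex A T := by
  refine hs.dConvex_iff.mpr ⟨hT, fun u hu v hv x hx => by_contra fun hxT => hxT ?_⟩
  obtain ⟨a, a', ha, ha', haa', hd⟩ := hs.exists_crossing_arc hu hxT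
  obtain ⟨b', b, hb', hb, hbb', hd'⟩ := hs.exists_crossing_arc (T := Tᶜ) hxT (not_not.mpr hv)
  rw [Set.mem_compl_iff, not_not] at hb
  refine h a a' b' b ha ha' haa' hb' hb hbb' x ?_
  have hua := hs.dirDist_triangle a a' x
  have hxb := hs.dirDist_triangle x b' b
  have hone := dirDist_le_one haa'
  have hone' := dirDist_le_one hbb'
  have huav := hs.dirDist_triangle u a v
  have habv := hs.dirDist_triangle a b v
  have haxb := hs.dirDist_triangle a x b
  omega

namespace DConvex

variable (hs : StrongConnected A) (hC : DConvex A C)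
include hs hC

theorem mem_of_dirDist (hu : u ∈ C) (hv : v ∈ C)
    (hx : dirDist A u x + dirDist A x v = dirDist A u v) : x ∈ C :=
  (hs.dConvex_iff.mp hC).2 u hu v hv x hx

theorem exists_crossing_arc (hu : u ∈ C) (huT : u ∈ T) (hv : v ∈ C) (hvT : v ∉ T) :
    ∃ x y, A x y ∧ x ∈ C ∧ y ∈ C ∧ x ∈ T ∧ y ∉ T := by
  obtain ⟨a, b, ha, hb, hab, hd⟩ := hs.exists_crossing_arc huT hvT
  have hone := dirDist_le_one hab
  have htri₁ := hs.dirDist_triangle u a v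
  have htri₂ := hs.dirDist_triangle u a b
  have htri₃ := hs.dirDist_triangle a b v
  have htri₄ := hs.dirDist_triangle u b v
  exact ⟨a, b, hab, hC.mem_of_dirDist hs hu hv (by omega), hC.mem_of_dirDist hs hu hv (by omega),
    ha, hb⟩

theorem mem_of_arc_of_arc (κ : G.Coloring Bool) (hA : IsOrientation G A) (huv : A u v)
    (hvw : A v w) (huw : u ≠ w) (hu : u ∈ C) (hw : w ∈ C) : v ∈ C := by
  have hne := mt hs.dirDist_eq_zero_iff.mp huw
  have heven : Even (dirDist A u w) := by
    rw [hs.even_dirDist_iff κ hA, Bool.eq_not.mpr (κ.valid (hA.adj huv)),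
      Bool.eq_not.mpr (κ.valid (hA.adj hvw)), Bool.not_not]
  obtain ⟨m, hm⟩ := heven
  have hone₁ := dirDist_le_one huv
  have hone₂ := dirDist_le_one hvw
  have htri := hs.dirDist_triangle u v w
  exact hC.mem_of_dirDist hs hu hw (by omega)

theorem mem_of_arc_of_arc_of_arc (κ : G.Coloring Bool) (hA : IsOrientation G A) (huv : A u v)
    (hvw : A v w) (hwx : A w x) (hux : ¬ A u x) (hu : u ∈ C) (hx : x ∈ C) : v ∈ C ∧ w ∈ C := by
  have hodd : ¬ Even (dirDist A u x) := by
    rw [hs.even_dirDist_iff κ hA, Bool.eq_not.mpr (κ.valid (hA.adj huv)),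
      Bool.eq_not.mpr (κ.valid (hA.adj hvw)), Bool.not_not]
    exact κ.valid (hA.adj hwx)
  have hne : dirDist A u x ≠ 1 := fun h => hux (hs.arc_of_dirDist_eq_one h)
  rw [Nat.not_even_iff] at hodd
  have hone₁ := dirDist_le_one huv
  have hone₂ := dirDist_le_one hvw
  have hone₃ := dirDist_le_one hwx
  have htri₁ := hs.dirDist_triangle u v x
  have htri₂ := hs.dirDist_triangle v w x
  have htri₃ := hs.dirDist_triangle u w x
  have htri₄ := hs.dirDist_triangle u v w
  exact ⟨hC.mem_of_dirDist hs hu hx (by omega), hC.mem_of_dirDist hs hu hx (by omega)⟩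

theorem mem_of_isDirSquare (κ : G.Coloring Bool) (hA : IsOrientation G A)
    (h : IsDirSquare A u v w x) (hu : u ∈ C) (hv : v ∈ C) : w ∈ C ∧ x ∈ C :=
  hC.mem_of_arc_of_arc_of_arc hs κ hA h.arc₂ h.arc₃ h.arc₄ (hA.asymm h.arc₁) hv hu

theorem union (hT : ∀ x y, A x y → (x ∈ C ∪ T ↔ y ∉ C ∪ T) → x ∈ C ∨ y ∈ C) :
    DConvex A (C ∪ T) := by
  refine dConvex_of_boundary hs (hC.1.mono Set.subset_union_left) fun a a' b' b ha ha' haa' hb' hb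
    hbb' x hx => Or.inl ?_
  have haC : a ∈ C := (hT a a' haa' (iff_of_true ha ha')).resolve_right fun h => ha' (Or.inl h)
  have hbC : b ∈ C := (hT b' b hbb' (iff_of_false hb' (not_not.mpr hb))).resolve_left
    fun h => hb' (Or.inl h)
  exact hC.mem_of_dirDist hs haC hbC hx

end DConvex

theorem StrongConnected.exists_arc_out [Nontrivial V] (hs : StrongConnected A) (u : V) :
    ∃ v, A u v := by
  obtain ⟨w, hw⟩ := exists_ne u
  obtain ⟨_, v, rfl, -, huv, -⟩ := hs.exists_crossing_arc (T := {u}) rfl hw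
  exact ⟨v, huv⟩

theorem StrongConnected.exists_arc_in [Nontrivial V] (hs : StrongConnected A) (u : V) :
    ∃ v, A v u := by
  obtain ⟨w, hw⟩ := exists_ne u
  obtain ⟨v, x, -, hx, hvx, -⟩ := hs.exists_crossing_arc (T := {u}ᶜ) hw (not_not.mpr rfl)
  obtain rfl := not_not.mp hx
  exact ⟨v, hvx⟩

namespace DConvex

variable (hs : StrongConnected A) (hA : IsOrientation G A) (hC : DConvex A C)
include hs hA hC

theorem exists_adj_adj_of_nontrivial (hnt : C.Nontrivial) (hx : x ∈ C) :
    ∃ y ∈ C, ∃ z ∈ C, y ≠ z ∧ G.Adj x y ∧ G.Adj x z := by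
  obtain ⟨w, hw, hwx⟩ := hnt.exists_ne x
  obtain ⟨_, y, hxy, -, hy, hx₁, -⟩ := hC.exists_crossing_arc hs (T := {x}) hx rfl hw hwx
  obtain ⟨z, _, hzx, hz, -, -, hx₂⟩ :=
    hC.exists_crossing_arc hs (T := {x}ᶜ) hw hwx hx (not_not.mpr rfl)
  rw [Set.mem_singleton_iff.mp hx₁] at hxy
  rw [Set.mem_singleton_iff.mp (not_not.mp hx₂)] at hzx
  refine ⟨y, hy, z, hz, ?_, hA.adj hxy, (hA.adj hzx).symm⟩
  rintro rfl
  exact hA.asymm hxy hzx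

theorem exists_adj_of_notMem [Nontrivial V] (κ : G.Coloring Bool) (hv : v ∉ C) :
    ∃ w, w ∉ C ∧ G.Adj v w := by
  obtain ⟨p, hp⟩ := hs.exists_arc_in v
  obtain ⟨q, hq⟩ := hs.exists_arc_out v
  by_cases hpC : p ∈ C
  · refine ⟨q, fun hqC => hv (hC.mem_of_arc_of_arc hs κ hA hp hq ?_ hpC hqC), hA.adj hq⟩
    rintro rfl
    exact hA.asymm hp hq
  · exact ⟨p, hpC, (hA.adj hp).symm⟩

/-- If the complement were at most an arc `v → w`, then every other arc at `v` would enter `v` and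
every other arc at `w` would leave `w`, so that `u → v → w → z` would be a geodesic of `C`. -/
theorem two_lt_ncard_compl [Nontrivial V] [Finite V] (κ : G.Coloring Bool)
    (hG : ∀ v w, G.Adj v w →
      ∃ u z, G.Adj v u ∧ u ≠ w ∧ G.Adj w z ∧ z ≠ v ∧ ¬ G.Adj u z)
    (hne : C ≠ Set.univ) : 2 < Cᶜ.ncard := by
  obtain ⟨v, w, hv, hw, hvw⟩ : ∃ v w, v ∉ C ∧ w ∉ C ∧ A v w := by
    obtain ⟨v, hv⟩ := (Set.ne_univ_iff_exists_notMem C).mp hne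
    obtain ⟨w, hw, hvw⟩ := hC.exists_adj_of_notMem hs hA κ hv
    exact (hA.arc_or_arc hvw).elim (fun h => ⟨v, w, hv, hw, h⟩) fun h => ⟨w, v, hw, hv, h⟩
  by_contra hcard
  have hmem : ∀ x, x ≠ v → x ≠ w → x ∈ C := fun x hxv hxw => by_contra fun hx =>
    hcard ((Set.two_lt_ncard_iff (Set.toFinite _)).mpr
      ⟨v, w, x, hv, hw, hx, (hA.adj hvw).ne, hxv.symm, hxw.symm⟩)
  obtain ⟨u, z, hu, huw, hz, hzv, huz⟩ := hG v w (hA.adj hvw)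
  have huC := hmem u hu.ne' huw
  have hzC := hmem z hzv hz.ne'
  have huv : A u v := by
    refine (hA.arc_or_arc hu).resolve_left fun hvu => hv ?_
    obtain ⟨p, hp⟩ := hs.exists_arc_in v
    have hpC := hmem p (hA.adj hp).ne (by rintro rfl; exact hA.asymm hvw hp)
    exact hC.mem_of_arc_of_arc hs κ hA hp hvu (by rintro rfl; exact hA.asymm hp hvu) hpC huC
  have hwz : A w z := by
    refine (hA.arc_or_arc hz).resolve_right fun hzw => hw ?_
    obtain ⟨q, hq⟩ := hs.exists_arc_out w
    have hqC := hmem q (by rintro rfl; exact hA.asymm hvw hq) (hA.adj hq).ne'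
    exact hC.mem_of_arc_of_arc hs κ hA hzw hq (by rintro rfl; exact hA.asymm hq hzw) hzC hqC
  exact hv (hC.mem_of_arc_of_arc_of_arc hs κ hA huv hvw hwz (mt hA.adj huz) huC hzC).1

end DConvex

end Convexity

section ConvexityNumber

variable [Fintype V] {A : V → V → Prop}

theorem convexityNumber_eq_of_isMax {k : ℕ}
    (hk : ∃ C : Set V, DConvex A C ∧ C ≠ Set.univ ∧ C.ncard = k)
    (hmax : ∀ C : Set V, DConvex A C → C ≠ Set.univ → C.ncard ≤ k) : convexityNumber A = k :=
  IsGreatest.csSup_eq ⟨hk, fun _ ⟨C, hC, hne, h⟩ => h ▸ hmax C hC hne⟩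

theorem DConvex.ncard_le_convexityNumber {C : Set V} (hC : DConvex A C) (hne : C ≠ Set.univ) :
    C.ncard ≤ convexityNumber A := by
  refine le_csSup ⟨Nat.card V, ?_⟩ ⟨C, hC, hne, rfl⟩
  rintro _ ⟨D, -, -, rfl⟩
  exact Set.ncard_le_card D

theorem StrongConnected.exists_ncard_eq_convexityNumber [Nontrivial V] (hs : StrongConnected A) :
    ∃ C : Set V, DConvex A C ∧ C ≠ Set.univ ∧ C.ncard = convexityNumber A := by
  refine Nat.sSup_mem (s := {k | ∃ C : Set V, DConvex A C ∧ C ≠ Set.univ ∧ C.ncard = k}) ?_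
    ⟨Nat.card V, ?_⟩
  · obtain ⟨u⟩ := (inferInstance : Nonempty V)
    exact ⟨_, {u}, dConvex_singleton hs u, Set.singleton_ne_univ u, rfl⟩
  · rintro _ ⟨D, -, -, rfl⟩
    exact Set.ncard_le_card D

end ConvexityNumber

section Grid

theorem gridGraph_adj {n m : ℕ} {x y : Fin n × Fin m} : (gridGraph n m).Adj x y ↔
    ((x.1 : ℕ) + 1 = y.1 ∨ (y.1 : ℕ) + 1 = x.1) ∧ x.2 = y.2 ∨
      ((x.2 : ℕ) + 1 = y.2 ∨ (y.2 : ℕ) + 1 = x.2) ∧ x.1 = y.1 := by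
  rw [gridGraph, SimpleGraph.boxProd_adj, SimpleGraph.pathGraph_adj, SimpleGraph.pathGraph_adj]

/-- The checkerboard colouring of the grid. -/
def gridColoring (n m : ℕ) : (gridGraph n m).Coloring Bool :=
  SimpleGraph.Coloring.mk
    (fun x => xor (SimpleGraph.pathGraph.bicoloring n x.1) (SimpleGraph.pathGraph.bicoloring m x.2))
    fun {x y} h => by
      rcases h with ⟨h, heq⟩ | ⟨h, heq⟩
      · simpa [heq] using (SimpleGraph.pathGraph.bicoloring n).valid h
      · simpa [heq] using (SimpleGraph.pathGraph.bicoloring m).valid h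

theorem exists_pathGraph_adj {n : ℕ} (hn : 2 ≤ n) (i : Fin n) :
    ∃ j, (SimpleGraph.pathGraph n).Adj i j := by
  simp only [SimpleGraph.pathGraph_adj]
  by_cases hi : (i : ℕ) = 0
  · exact ⟨⟨1, by omega⟩, by simp only; omega⟩
  · exact ⟨⟨i - 1, by omega⟩, by simp only; omega⟩

theorem exists_pathGraph_adj_ne {n : ℕ} (hn : 3 ≤ n) {i j : Fin n}
    (h : (SimpleGraph.pathGraph n).Adj i j) :
    (∃ k, (SimpleGraph.pathGraph n).Adj i k ∧ k ≠ j) ∨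
      ∃ k, (SimpleGraph.pathGraph n).Adj j k ∧ k ≠ i := by
  simp only [SimpleGraph.pathGraph_adj, ne_eq, Fin.ext_iff] at h ⊢
  by_cases hij : (i : ℕ) + 1 = j ∧ 1 ≤ (i : ℕ) ∨ (j : ℕ) + 1 = i ∧ (i : ℕ) + 1 < n
  · exact Or.inl ⟨⟨2 * i - j, by omega⟩, by simp only; omega⟩
  · exact Or.inr ⟨⟨2 * j - i, by omega⟩, by simp only; omega⟩

theorem exists_gridGraph_adj_not_adj {n m : ℕ} (hn : 3 ≤ n) (hm : 3 ≤ m)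
    (v w : Fin n × Fin m) (h : (gridGraph n m).Adj v w) :
    ∃ u z, (gridGraph n m).Adj v u ∧ u ≠ w ∧ (gridGraph n m).Adj w z ∧ z ≠ v ∧
      ¬ (gridGraph n m).Adj u z := by
  obtain ⟨i, c⟩ := v
  obtain ⟨j, d⟩ := w
  obtain ⟨k, hk⟩ := exists_pathGraph_adj (show 2 ≤ n by omega) i
  obtain ⟨l, hl⟩ := exists_pathGraph_adj (show 2 ≤ m by omega) c
  rcases h with ⟨h, rfl : c = d⟩ | ⟨h, rfl : i = j⟩
  · rcases exists_pathGraph_adj_ne hn h with ⟨x, hx, hxj⟩ | ⟨x, hx, hxi⟩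
    · exact ⟨(x, c), (j, l), .inl ⟨hx, rfl⟩, by simp [hxj], .inr ⟨hl, rfl⟩, by simp [hl.ne'],
        by simp [gridGraph, SimpleGraph.boxProd_adj, hl.ne, hxj]⟩
    · exact ⟨(i, l), (x, c), .inr ⟨hl, rfl⟩, by simp [hl.ne'], .inl ⟨hx, rfl⟩, by simp [hxi],
        by simp [gridGraph, SimpleGraph.boxProd_adj, hl.ne', hxi.symm]⟩
  · rcases exists_pathGraph_adj_ne hm h with ⟨x, hx, hxd⟩ | ⟨x, hx, hxc⟩
    · exact ⟨(i, x), (k, d), .inr ⟨hx, rfl⟩, by simp [hxd], .inl ⟨hk, rfl⟩, by simp [hk.ne'],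
        by simp [gridGraph, SimpleGraph.boxProd_adj, hk.ne, hxd]⟩
    · exact ⟨(k, c), (i, x), .inl ⟨hk, rfl⟩, by simp [hk.ne'], .inr ⟨hx, rfl⟩, by simp [hxc],
        by simp [gridGraph, SimpleGraph.boxProd_adj, hk.ne', hxc.symm]⟩

theorem DConvex.ncard_add_three_le {n m : ℕ} (hn : 3 ≤ n) (hm : 3 ≤ m)
    {A : Fin n × Fin m → Fin n × Fin m → Prop} {C : Set (Fin n × Fin m)}
    (hA : IsOrientation (gridGraph n m) A) (hs : StrongConnected A) (hC : DConvex A C)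
    (hne : C ≠ Set.univ) : C.ncard + 3 ≤ n * m := by
  have : Nontrivial (Fin n × Fin m) :=
    ⟨(⟨0, by omega⟩, ⟨0, by omega⟩), (⟨1, by omega⟩, ⟨0, by omega⟩), by simp⟩
  have hlt := hC.two_lt_ncard_compl hs hA (gridColoring n m)
    (exists_gridGraph_adj_not_adj hn hm) hne
  have hcard := Set.ncard_add_ncard_compl C
  rw [Nat.card_eq_fintype_card, Fintype.card_prod, Fintype.card_fin, Fintype.card_fin] at hcard
  omega

end Grid

section Rows

variable {n : ℕ} {A : Fin n × Fin 3 → Fin n × Fin 3 → Prop} {C : Set (Fin n × Fin 3)} {i m M : ℕ}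
  {c : Fin 3}

open Classical in
/-- The columns in which `C` meets row `i`; it is empty when the grid has no row `i`. -/
noncomputable def gridRow (C : Set (Fin n × Fin 3)) (i : ℕ) : Finset (Fin 3) :=
  {c | ∃ x ∈ C, (x.1 : ℕ) = i ∧ x.2 = c}

theorem mem_gridRow : c ∈ gridRow C i ↔ ∃ x ∈ C, (x.1 : ℕ) = i ∧ x.2 = c := by
  simp [gridRow]

theorem mem_gridRow_val {x : Fin n × Fin 3} : x.2 ∈ gridRow C x.1 ↔ x ∈ C := by
  rw [mem_gridRow]
  refine ⟨?_, fun hx => ⟨x, hx, rfl, rfl⟩⟩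
  rintro ⟨y, hy, h₁, h₂⟩
  rwa [← Prod.ext (Fin.ext h₁) h₂]

theorem ncard_eq_sum_card_gridRow {t : Finset ℕ} (ht : ∀ x ∈ C, (x.1 : ℕ) ∈ t) :
    C.ncard = ∑ i ∈ t, (gridRow C i).card := by
  classical
  rw [Set.ncard_eq_toFinset_card', Finset.card_eq_sum_card_fiberwise
    (f := fun x : Fin n × Fin 3 => (x.1 : ℕ)) (t := t) (by simpa [Set.MapsTo] using ht)]
  refine Finset.sum_congr rfl fun i _ => Finset.card_nbij Prod.snd ?_ ?_ ?_
  · intro x hx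
    simp only [Finset.coe_filter, Set.mem_toFinset, Set.mem_ofPred_eq] at hx
    exact hx.2 ▸ mem_gridRow_val.mpr hx.1
  · intro x hx y hy hxy
    simp only [Finset.coe_filter, Set.mem_toFinset, Set.mem_ofPred_eq] at hx hy
    exact Prod.ext (Fin.ext (hx.2.trans hy.2.symm)) hxy
  · intro c hc
    obtain ⟨x, hx, hi, hxc⟩ := mem_gridRow.mp hc
    exact ⟨x, by simpa using ⟨hx, hi⟩, hxc⟩

/-- `m` and `M` are the lowest and the highest row that `C` meets. -/
structure IsRowSpan (C : Set (Fin n × Fin 3)) (m M : ℕ) : Prop where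
  nonempty_left : (gridRow C m).Nonempty
  nonempty_right : (gridRow C M).Nonempty
  mem_Icc : ∀ x ∈ C, (x.1 : ℕ) ∈ Finset.Icc m M

theorem exists_isRowSpan (hC : C.Nonempty) : ∃ m M, IsRowSpan C m M := by
  obtain ⟨x, hx, hmin⟩ := C.exists_min_image (fun x => (x.1 : ℕ)) (Set.toFinite C) hC
  obtain ⟨y, hy, hmax⟩ := C.exists_max_image (fun x => (x.1 : ℕ)) (Set.toFinite C) hC
  exact ⟨x.1, y.1, ⟨_, mem_gridRow_val.mpr hx⟩, ⟨_, mem_gridRow_val.mpr hy⟩,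
    fun z hz => Finset.mem_Icc.mpr ⟨hmin z hz, hmax z hz⟩⟩

theorem IsRowSpan.le (h : IsRowSpan C m M) : m ≤ M := by
  obtain ⟨x, hx, -⟩ := mem_gridRow.mp h.nonempty_left.choose_spec
  exact Finset.nonempty_Icc.mp ⟨_, h.mem_Icc x hx⟩

theorem IsRowSpan.gridRow_succ_eq_empty (h : IsRowSpan C m M) : gridRow C (M + 1) = ∅ :=
  Finset.eq_empty_of_forall_notMem fun c hc => by
    obtain ⟨x, hx, hxM, -⟩ := mem_gridRow.mp hc
    have := Finset.mem_Icc.mp (h.mem_Icc x hx)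
    omega

/-- The local condition on an end row of a convex set of minimum degree 2, `R` being the columns of
that row and `S` those of the next row inside. -/
def IsEndRow (R S : Finset (Fin 3)) : Prop :=
  ∀ c ∈ R, c ≠ 1 → 1 ∈ R ∧ c ∈ S

instance (R S : Finset (Fin 3)) : Decidable (IsEndRow R S) :=
  inferInstanceAs (Decidable (∀ c ∈ R, c ≠ 1 → 1 ∈ R ∧ c ∈ S))

namespace IsEndRow

variable {R S T : Finset (Fin 3)}

theorem card_le_one (hR : IsEndRow R ∅) : R.card ≤ 1 := by
  decide +revert

theorem card_add_card (hR : IsEndRow R S) (hS : IsEndRow S R) (hRS : 1 < (R ∩ S).card) :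
    R.card + S.card = 4 ∨ R.card + S.card = 6 := by
  decide +revert

theorem card_add_card_add_card (hR : IsEndRow R S) (hT : IsEndRow T S) (hRS : 1 < (R ∩ S).card)
    (hST : 1 < (S ∩ T).card) :
    R.card + S.card + T.card = 6 ∨ 8 ≤ R.card + S.card + T.card ∨
      R.card + S.card + T.card = 7 ∧ S = Finset.univ ∧ R ≠ Finset.univ ∧ T ≠ Finset.univ := by
  decide +revert

end IsEndRow

namespace DConvex

variable (hs : StrongConnected A) (hA : IsOrientation (gridGraph n 3) A) (hC : DConvex A C)
include hs hA hC

theorem one_lt_card_gridRow_inter (hm : (gridRow C m).Nonempty) (hM : (gridRow C M).Nonempty)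
    (hmi : m ≤ i) (hiM : i < M) : 1 < (gridRow C i ∩ gridRow C (i + 1)).card := by
  obtain ⟨u, hu, hum, -⟩ := mem_gridRow.mp hm.choose_spec
  obtain ⟨v, hv, hvM, -⟩ := mem_gridRow.mp hM.choose_spec
  have hui : (u.1 : ℕ) ≤ i := by omega
  have hvi : ¬ (v.1 : ℕ) ≤ i := by omega
  have hcross : ∀ {x y : Fin n × Fin 3}, (gridGraph n 3).Adj x y → x ∈ C → y ∈ C →
      (x.1 : ℕ) ≤ i → ¬ (y.1 : ℕ) ≤ i →
      (x.1 : ℕ) = i ∧ (y.1 : ℕ) = i + 1 ∧ x.2 = y.2 ∧ x.2 ∈ gridRow C i ∩ gridRow C (i + 1) := by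
    intro x y hxy hx hy hxi hyi
    rw [gridGraph_adj] at hxy
    obtain ⟨hx1, hy1, hxy2⟩ : (x.1 : ℕ) = i ∧ (y.1 : ℕ) = i + 1 ∧ x.2 = y.2 := by omega
    refine ⟨hx1, hy1, hxy2, Finset.mem_inter.mpr ⟨?_, ?_⟩⟩
    · exact hx1 ▸ mem_gridRow_val.mpr hx
    · exact hxy2 ▸ hy1 ▸ mem_gridRow_val.mpr hy
  obtain ⟨x, y, hxy, hx, hy, hxi, hyi⟩ := hC.exists_crossing_arc hs
    (T := {x : Fin n × Fin 3 | (x.1 : ℕ) ≤ i}) hu hui hv hvi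
  obtain ⟨y', x', hyx', hy', hx', hyi', hxi'⟩ := hC.exists_crossing_arc hs
    (T := {x : Fin n × Fin 3 | ¬ (x.1 : ℕ) ≤ i}) hv hvi hu (not_not.mpr hui)
  obtain ⟨hx₁, hy₁, hxy₂, hmem⟩ := hcross (hA.adj hxy) hx hy hxi hyi
  obtain ⟨hx₁', hy₁', hxy₂', hmem'⟩ := hcross (hA.adj hyx').symm hx' hy' (not_not.mp hxi') hyi'
  refine Finset.one_lt_card.mpr ⟨_, hmem, _, hmem', fun h => hA.asymm hxy ?_⟩
  have hyy' : y = y' := Prod.ext (Fin.ext (by omega)) (by rw [← hxy₂, ← hxy₂', h])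
  have hxx' : x = x' := Prod.ext (Fin.ext (by omega)) h
  rwa [hxx', hyy']

theorem isEndRow_gridRow (hnt : C.Nontrivial) {j : ℕ}
    (hj : ∀ x ∈ C, (x.1 : ℕ) = i + 1 ∨ (x.1 : ℕ) + 1 = i → (x.1 : ℕ) = j) :
    IsEndRow (gridRow C i) (gridRow C j) := by
  intro c hc hc1
  obtain ⟨x, hx, rfl, rfl⟩ := mem_gridRow.mp hc
  obtain ⟨y, hy, z, hz, hyz, hxy, hxz⟩ := hC.exists_adj_adj_of_nontrivial hs hA hnt hx
  have hor : ∀ w ∈ C, (gridGraph n 3).Adj x w →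
      ((w.1 : ℕ) = x.1 ∧ w.2 = 1) ∨ ((w.1 : ℕ) = j ∧ w.2 = x.2) := by
    intro w hw hxw
    have := hj w hw
    rw [gridGraph_adj] at hxw
    omega
  have hmem : ∀ {w : Fin n × Fin 3} {k : ℕ} {d : Fin 3}, w ∈ C → (w.1 : ℕ) = k ∧ w.2 = d →
      d ∈ gridRow C k := fun hw hwk => mem_gridRow.mpr ⟨_, hw, hwk⟩
  rcases hor y hy hxy with hy' | hy' <;> rcases hor z hz hxz with hz' | hz'
  · exact absurd (Prod.ext (Fin.ext (hy'.1.trans hz'.1.symm)) (hy'.2.trans hz'.2.symm)) hyz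
  · exact ⟨hmem hy hy', hmem hz hz'⟩
  · exact ⟨hmem hz hz', hmem hy hy'⟩
  · exact absurd (Prod.ext (Fin.ext (hy'.1.trans hz'.1.symm)) (hy'.2.trans hz'.2.symm)) hyz

theorem two_mul_le_ncard (h : IsRowSpan C m M) (hmM : m < M) : 2 * (M + 1 - m) ≤ C.ncard := by
  have htwo : ∀ i ∈ Finset.Icc m M, 2 ≤ (gridRow C i).card := by
    intro i hi
    obtain ⟨hmi, hiM⟩ := Finset.mem_Icc.mp hi
    have hinter := fun j => hC.one_lt_card_gridRow_inter hs hA h.nonempty_left h.nonempty_right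
      (i := j)
    rcases hiM.lt_or_eq with hiM | rfl
    · exact (hinter i hmi hiM).trans_le (Finset.card_le_card Finset.inter_subset_left)
    · obtain ⟨j, rfl⟩ := Nat.exists_eq_add_of_lt hmM
      exact (hinter (m + j) (by omega) (by omega)).trans_le
        (Finset.card_le_card Finset.inter_subset_right)
  rw [ncard_eq_sum_card_gridRow h.mem_Icc, mul_comm, ← Nat.card_Icc, ← smul_eq_mul]
  exact Finset.card_nsmul_le_sum _ _ _ htwo

theorem ncard_of_nontrivial (hnt : C.Nontrivial) (h : IsRowSpan C m M) :
    C.ncard = 4 ∨ C.ncard = 6 ∨ 8 ≤ C.ncard ∨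
      C.ncard = 7 ∧ M = m + 2 ∧ gridRow C (m + 1) = Finset.univ ∧
        gridRow C m ≠ Finset.univ ∧ gridRow C M ≠ Finset.univ := by
  have hsum := ncard_eq_sum_card_gridRow h.mem_Icc
  have hbound := fun x hx => Finset.mem_Icc.mp (h.mem_Icc x hx)
  have hinter := fun i => hC.one_lt_card_gridRow_inter hs hA h.nonempty_left h.nonempty_right
    (i := i)
  have hleft : IsEndRow (gridRow C m) (gridRow C (m + 1)) :=
    hC.isEndRow_gridRow hs hA hnt fun x hx _ => by have := hbound x hx; omega
  have hright : IsEndRow (gridRow C M) (gridRow C (M - 1)) :=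
    hC.isEndRow_gridRow hs hA hnt fun x hx _ => by have := hbound x hx; omega
  obtain ⟨k, rfl⟩ := Nat.exists_eq_add_of_le h.le
  rcases (by omega : k = 0 ∨ k = 1 ∨ k = 2 ∨ 3 ≤ k) with rfl | rfl | rfl | hk
  · have hlt := Set.one_lt_ncard_iff_nontrivial.mpr hnt
    rw [hsum, Nat.add_zero, Finset.Icc_self, Finset.sum_singleton] at hlt
    rw [← Nat.add_zero m, h.gridRow_succ_eq_empty] at hleft
    exact absurd hleft.card_le_one hlt.not_ge
  · rw [Finset.sum_Icc_succ_top (by omega), Finset.Icc_self, Finset.sum_singleton] at hsum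
    have := hleft.card_add_card hright (hinter m le_rfl (by omega))
    omega
  · rw [Finset.sum_Icc_succ_top (by omega), Finset.sum_Icc_succ_top (by omega), Finset.Icc_self,
      Finset.sum_singleton] at hsum
    rw [hsum]
    rcases hleft.card_add_card_add_card hright (hinter m le_rfl (by omega))
      (hinter (m + 1) (by omega) (by omega)) with h6 | h8 | h7
    · exact Or.inr (Or.inl h6)
    · exact Or.inr (Or.inr (Or.inl h8))
    · exact Or.inr (Or.inr (Or.inr ⟨h7.1, rfl, h7.2⟩))
  · have := hC.two_mul_le_ncard hs hA h (by omega)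
    omega

theorem union_of_gridRow_eq_univ (hi : gridRow C (i + 1) = Finset.univ) :
    DConvex A (C ∪ {x | (x.1 : ℕ) ≤ i}) := by
  have hstep : ∀ x y, (gridGraph n 3).Adj x y → x ∈ C ∪ {x | (x.1 : ℕ) ≤ i} →
      y ∉ C ∪ {x | (x.1 : ℕ) ≤ i} → x ∈ C := by
    intro x y hxy hx hy
    refine hx.resolve_right fun hxi => hy (Or.inl (mem_gridRow_val.mp ?_))
    have hyi : ¬ (y.1 : ℕ) ≤ i := fun hyi => hy (Or.inr hyi)
    rw [Set.mem_ofPred_eq] at hxi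
    rw [gridGraph_adj] at hxy
    rw [show (y.1 : ℕ) = i + 1 by omega, hi]
    exact Finset.mem_univ _
  refine hC.union hs fun x y hxy hiff => ?_
  by_cases hx : x ∈ C ∪ {x | (x.1 : ℕ) ≤ i}
  · exact Or.inl (hstep x y (hA.adj hxy) hx (hiff.mp hx))
  · exact Or.inr (hstep y x (hA.adj hxy).symm (not_not.mp (mt hiff.mpr hx)) hx)

/-- With seven vertices the middle one of the three rows is full, and `C` can be enlarged by all
the rows below it. -/
theorem exists_ncard_lt_of_ncard_eq_seven (h7 : C.ncard = 7) :
    ∃ D, DConvex A D ∧ D ≠ Set.univ ∧ 7 < D.ncard := by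
  obtain ⟨m, M, h⟩ := exists_isRowSpan hC.1
  have hnt : C.Nontrivial := Set.one_lt_ncard_iff_nontrivial.mp (by omega)
  obtain ⟨-, hM, hmid, hleft, hright⟩ := (((hC.ncard_of_nontrivial hs hA hnt h).resolve_left
    (by omega)).resolve_left (by omega)).resolve_left (by omega)
  obtain ⟨c, hc⟩ := not_forall.mp (mt Finset.eq_univ_iff_forall.mpr hleft)
  obtain ⟨d, hd⟩ := not_forall.mp (mt Finset.eq_univ_iff_forall.mpr hright)
  obtain ⟨x, -, hxM, -⟩ := mem_gridRow.mp h.nonempty_right.choose_spec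
  refine ⟨_, hC.union_of_gridRow_eq_univ hs hA hmid, fun huniv => ?_, ?_⟩
  · have hmem : ((x.1, d) : Fin n × Fin 3) ∈ C ∪ {x | (x.1 : ℕ) ≤ m} := huniv ▸ Set.mem_univ _
    rcases hmem with hmem | hmem
    · exact hd (hxM ▸ mem_gridRow_val.mpr hmem)
    · have : (x.1 : ℕ) ≤ m := hmem
      omega
  · rw [← h7]
    refine Set.ncard_lt_ncard (Set.subset_union_left.ssubset_of_ne fun heq => hc ?_)
    have hmem : ((⟨m, by omega⟩, c) : Fin n × Fin 3) ∈ C := by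
      rw [heq]
      exact Or.inr (le_refl m)
    exact mem_gridRow.mpr ⟨_, hmem, rfl, rfl⟩

end DConvex

theorem strongConvexitySpectrum_gridGraph_subset (hn : 3 ≤ n) :
    strongConvexitySpectrum (gridGraph n 3) ⊆ {k | 1 ≤ k ∧ k ≤ 3 * n - 3} \ {2, 3, 5, 7} := by
  rintro _ ⟨A, hA, hs, rfl⟩
  have : Nontrivial (Fin n × Fin 3) :=
    ⟨(⟨0, by omega⟩, 0), (⟨0, by omega⟩, 1), by simp⟩
  obtain ⟨C, hC, hne, hcard⟩ := hs.exists_ncard_eq_convexityNumber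
  rw [← hcard]
  have hle := hC.ncard_add_three_le hn le_rfl hA hs hne
  have hpos : 0 < C.ncard := (Set.ncard_pos).mpr hC.1
  have hseven : C.ncard ≠ 7 := fun h7 => by
    obtain ⟨D, hD, hDne, hlt⟩ := hC.exists_ncard_lt_of_ncard_eq_seven hs hA h7
    have := hD.ncard_le_convexityNumber hDne
    omega
  refine ⟨⟨hpos, by omega⟩, ?_⟩
  simp only [Set.mem_insert_iff, Set.mem_singleton_iff, not_or]
  rcases C.subsingleton_or_nontrivial with hsub | hnt
  · have := Set.ncard_le_one_iff_subsingleton.mpr hsub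
    omega
  · obtain ⟨m, M, h⟩ := exists_isRowSpan hC.1
    rcases hC.ncard_of_nontrivial hs hA hnt h with h4 | h6 | h8 | h7 <;> omega

end Rows

section Dominant

variable {A : V → V → Prop} {S C : Set V}

/-- `S` is a proper convex set of a strongly connected digraph such that only the whole vertex set
is convex and contains an arc with tail outside `S`. Then `S` is a maximum proper convex set, and
this stronger property survives the folding extension below. -/
structure IsDominant (A : V → V → Prop) (S : Set V) : Prop where
  strong : StrongConnected A
  convex : DConvex A S
  ne_univ : S ≠ Set.univ
  eq_univ : ∀ C, DConvex A C → ∀ x y, A x y → x ∈ C → y ∈ C → x ∉ S → C = Set.univ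

theorem IsDominant.convexityNumber_eq [Fintype V] (hS : IsDominant A S) :
    convexityNumber A = S.ncard := by
  refine convexityNumber_eq_of_isMax ⟨S, hS.convex, hS.ne_univ, rfl⟩ fun C hC hne => ?_
  by_cases hCS : C ⊆ S
  · exact Set.ncard_le_ncard hCS
  obtain ⟨x, hx, hxS⟩ := Set.not_subset.mp hCS
  have hsub : C ⊆ {x} := fun w hw => by_contra fun hwx => hne <| by
    obtain ⟨x', y, hxy, hx', hy, rfl, -⟩ :=
      hC.exists_crossing_arc hS.strong (T := {x}) hx rfl hw hwx
    exact hS.eq_univ C hC _ _ hxy hx' hy hxS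
  calc C.ncard ≤ ({x} : Set V).ncard := Set.ncard_le_ncard hsub
    _ = 1 := Set.ncard_singleton x
    _ ≤ S.ncard := (Set.ncard_pos).mpr hS.convex.1

theorem DConvex.convexityNumber_eq_of_pair [Fintype V] (hS : DConvex A S) (hne : S ≠ Set.univ)
    {T : Set V} (hTS : T.ncard ≤ S.ncard)
    (hpair : ∀ C, DConvex A C → ∀ x ∈ C, ∀ y ∈ C, x ≠ y →
      C = Set.univ ∨ x ∈ S ∧ y ∈ S ∨ x ∈ T ∧ y ∈ T) :
    convexityNumber A = S.ncard := by
  refine convexityNumber_eq_of_isMax ⟨S, hS, hne, rfl⟩ fun C hC hCne => ?_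
  have hpair := fun x hx y hy hxy => (hpair C hC x hx y hy hxy).resolve_left hCne
  by_cases hCS : C ⊆ S
  · exact Set.ncard_le_ncard hCS
  by_cases hCT : C ⊆ T
  · exact (Set.ncard_le_ncard hCT).trans hTS
  obtain ⟨x, hx, hxS⟩ := Set.not_subset.mp hCS
  obtain ⟨y, hy, hyT⟩ := Set.not_subset.mp hCT
  obtain rfl : x = y := by_contra fun hxy =>
    (hpair x hx y hy hxy).elim (fun h => hxS h.1) fun h => hyT h.2
  have hsub : C ⊆ {x} := fun w hw => by_contra fun hwx =>
    (hpair w hw x hx hwx).elim (fun h => hxS h.2) fun h => hyT h.2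
  calc C.ncard ≤ ({x} : Set V).ncard := Set.ncard_le_ncard hsub
    _ = 1 := Set.ncard_singleton x
    _ ≤ S.ncard := (Set.ncard_pos).mpr hS.1

end Dominant

section Retract

variable {V' : Type*} {A : V → V → Prop} {A' : V' → V' → Prop} {φ : V' → V} {ψ : V → V'}
  (hφ : ∀ x y, A' x y → A (φ x) (φ y)) (hψ : ∀ x y, A x y → A' (ψ x) (ψ y))
  (hφψ : Function.LeftInverse φ ψ) (hs : StrongConnected A) (hs' : StrongConnected A')
include hφ hψ hφψ hs hs'

theorem dirDist_section (u v : V) : dirDist A' (ψ u) (ψ v) = dirDist A u v := by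
  refine le_antisymm (hs.dirDist_map_le hψ u v) ?_
  have hle := hs'.dirDist_map_le hφ (ψ u) (ψ v)
  rwa [hφψ, hφψ] at hle

theorem DConvex.preimage_section {C : Set V'} (hC : DConvex A' C) (hne : (ψ ⁻¹' C).Nonempty) :
    DConvex A (ψ ⁻¹' C) := by
  refine hs.dConvex_iff.mpr ⟨hne, fun u hu v hv x hx => ?_⟩
  refine DConvex.mem_of_dirDist hs' hC (u := ψ u) (v := ψ v) hu hv ?_
  simpa only [dirDist_section hφ hψ hφψ hs hs'] using hx

theorem DConvex.preimage_retraction {S : Set V} (hS : DConvex A S)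
    (hrange : ∀ x y, A' x y ∨ A' y x → φ x ∈ S → φ y ∉ S → x ∈ Set.range ψ) :
    DConvex A' (φ ⁻¹' S) := by
  refine dConvex_of_boundary hs' (hS.1.preimage hφψ.surjective)
    fun a a' b' b ha ha' haa' hb' hb hbb' x hx => ?_
  obtain ⟨u, rfl⟩ := hrange a a' (.inl haa') ha ha'
  obtain ⟨v, rfl⟩ := hrange b b' (.inr hbb') hb hb'
  have hux := hs'.dirDist_map_le hφ (ψ u) x
  have hxv := hs'.dirDist_map_le hφ x (ψ v)
  have htri := hs.dirDist_triangle u (φ x) v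
  have heq := dirDist_section hφ hψ hφψ hs hs' u v
  rw [hφψ] at hux hxv
  rw [Set.mem_preimage, hφψ] at ha hb
  exact Set.mem_preimage.mpr (hS.mem_of_dirDist hs ha hb (by omega))

end Retract

section Fold

variable {I I' W : Type*} {H : SimpleGraph I} {H' : SimpleGraph I'} {K : SimpleGraph W}

/-- `H'` is `H` with a new leaf `z` attached at `a`: `ι` embeds `H` in `H'`, and `ρ` folds `H'` back
onto `H`, the leaf going to a neighbour of `a`. -/
structure IsLeafFold (H : SimpleGraph I) (H' : SimpleGraph I') (ι : I → I') (ρ : I' → I) (z : I')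
    (a : I) : Prop where
  leftInverse : Function.LeftInverse ρ ι
  eq_or_mem_range : ∀ x, x = z ∨ x ∈ Set.range ι
  ne : ∀ i, ι i ≠ z
  adj_iff : ∀ i j, H'.Adj (ι i) (ι j) ↔ H.Adj i j
  adj_leaf_iff : ∀ i, H'.Adj (ι i) z ↔ i = a
  adj_fold : H.Adj a (ρ z)

/-- The orientation of `G'` induced from the arcs `A` along a map `φ`. -/
def arcPullback {V' : Type*} (G' : SimpleGraph V') (φ : V' → V) (A : V → V → Prop) (x y : V') :
    Prop :=
  G'.Adj x y ∧ A (φ x) (φ y)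

theorem IsDirSquare.arcPullback {V' : Type*} {G' : SimpleGraph V'} {φ : V' → V}
    {A : V → V → Prop} {u v w x : V'} (h : IsDirSquare A (φ u) (φ v) (φ w) (φ x))
    (huv : G'.Adj u v) (hvw : G'.Adj v w) (hwx : G'.Adj w x) (hxu : G'.Adj x u) :
    IsDirSquare (arcPullback G' φ A) u v w x :=
  ⟨⟨huv, h.arc₁⟩, ⟨hvw, h.arc₂⟩, ⟨hwx, h.arc₃⟩, ⟨hxu, h.arc₄⟩⟩

theorem IsOrientation.arcPullback {V' : Type*} {G : SimpleGraph V} {G' : SimpleGraph V'}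
    {A : V → V → Prop} (hA : IsOrientation G A) (φ : G' →g G) :
    IsOrientation G' (arcPullback G' φ A) :=
  ⟨fun _ _ h => h.1,
    fun _ _ h => (hA.arc_or_arc (φ.map_adj h)).imp (.intro h) (.intro h.symm),
    fun _ _ h h' => hA.asymm h.2 h'.2⟩

/-- The layers of `a` and `b` in a product with `K` are joined by directed squares over the edges of
`K`, and lie both inside `S` (when `σ` is true) or both outside `S` (when `σ` is false). -/
structure IsCollar (A : I × W → I × W → Prop) (S : Set (I × W)) (σ : Prop) (a b : I) : Prop where
  isDirSquare : ∀ c d, A (a, c) (a, d) → IsDirSquare A (a, c) (a, d) (b, d) (b, c)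
  mem_left_iff : ∀ c, (a, c) ∈ S ↔ σ
  mem_right_iff : ∀ c, (b, c) ∈ S ↔ σ

instance [Fintype W] {A : I × W → I × W → Prop} [DecidableRel A]
    {S : Set (I × W)} [DecidablePred (· ∈ S)] {σ : Prop} [Decidable σ] {a b : I} :
    Decidable (IsCollar A S σ a b) :=
  decidable_of_iff ((∀ c d, A (a, c) (a, d) → A (a, d) (b, d) ∧ A (b, d) (b, c) ∧ A (b, c) (a, c)) ∧
    (∀ c, (a, c) ∈ S ↔ σ) ∧ ∀ c, (b, c) ∈ S ↔ σ)
    ⟨fun h => ⟨fun c d hcd =>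
        ⟨hcd, (h.1 c d hcd).1, (h.1 c d hcd).2.1, (h.1 c d hcd).2.2⟩, h.2.1, h.2.2⟩,
      fun h => ⟨fun c d hcd => let hsq := h.isDirSquare c d hcd
        ⟨hsq.arc₂, hsq.arc₃, hsq.arc₄⟩, h.mem_left_iff, h.mem_right_iff⟩⟩

namespace IsCollar

variable {A : I × W → I × W → Prop} {S C : Set (I × W)} {σ : Prop} {a b : I}
  (h : IsCollar A S σ a b) (hA : IsOrientation (H.boxProd K) A)
include h hA

theorem symm : IsCollar A S σ b a where
  isDirSquare c d hcd := by
    have hK : K.Adj c d := SimpleGraph.boxProd_adj_right.mp (hA.adj hcd)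
    have hdc : A (a, d) (a, c) :=
      (hA.arc_or_arc (SimpleGraph.boxProd_adj_right.mpr hK)).resolve_left fun hcd' =>
        hA.asymm hcd (h.isDirSquare c d hcd').arc₃
    exact (h.isDirSquare d c hdc).rotate.rotate
  mem_left_iff := h.mem_right_iff
  mem_right_iff := h.mem_left_iff

variable (hK : ∀ c, ∃ d, K.Adj c d)
include hK

theorem exists_isDirSquare (c : W) : ∃ d,
    IsDirSquare A (a, c) (a, d) (b, d) (b, c) ∨ IsDirSquare A (a, d) (a, c) (b, c) (b, d) := by
  obtain ⟨d, hcd⟩ := hK c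
  exact ⟨d, (hA.arc_or_arc (SimpleGraph.boxProd_adj_right.mpr hcd)).imp (h.isDirSquare c d)
    (h.isDirSquare d c)⟩

theorem dirReachable (c : W) : DirReachable A (a, c) (b, c) := by
  obtain ⟨d, hsq | hsq⟩ := h.exists_isDirSquare hA hK c
  · exact .head hsq.arc₁ (.head hsq.arc₂ (.of_arc hsq.arc₃))
  · exact .of_arc hsq.arc₂

variable (κ : (H.boxProd K).Coloring Bool) (hs : StrongConnected A) (hC : DConvex A C)
include κ hs hC

theorem mem_right (ha : ∀ c, (a, c) ∈ C) (c : W) : (b, c) ∈ C := by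
  obtain ⟨d, hsq | hsq⟩ := h.exists_isDirSquare hA hK c
  · exact (hC.mem_of_isDirSquare hs κ hA hsq (ha c) (ha d)).2
  · exact (hC.mem_of_isDirSquare hs κ hA hsq (ha d) (ha c)).1

theorem exists_arc_left {x y : I × W} (hxy : A x y) (hxC : x ∈ C) (hyC : y ∈ C)
    (hx : x.1 = a ∨ x.1 = b) (hy : y.1 = a ∨ y.1 = b) :
    ∃ c d, A (a, c) (a, d) ∧ (a, c) ∈ C ∧ (a, d) ∈ C := by
  obtain ⟨i, c⟩ := x
  obtain ⟨j, d⟩ := y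
  obtain ⟨e, hsq⟩ := h.exists_isDirSquare hA hK c
  rcases hx with rfl | rfl <;> rcases hy with rfl | rfl
  · exact ⟨c, d, hxy, hxC, hyC⟩
  · rcases hA.adj hxy with ⟨-, rfl : c = d⟩ | ⟨-, rfl : i = j⟩
    · replace hsq := hsq.resolve_left fun hsq => hA.asymm hxy hsq.arc₄
      exact ⟨e, c, hsq.arc₁, (hC.mem_of_isDirSquare hs κ hA hsq.rotate hxC hyC).2, hxC⟩
    · exact ⟨c, d, hxy, hxC, hyC⟩
  · rcases hA.adj hxy with ⟨-, rfl : c = d⟩ | ⟨-, rfl : i = j⟩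
    · replace hsq := hsq.resolve_right fun hsq => hA.asymm hxy hsq.arc₂
      exact ⟨c, e, hsq.arc₁, hyC,
        (hC.mem_of_isDirSquare hs κ hA hsq.rotate.rotate.rotate hxC hyC).1⟩
    · exact ⟨c, d, hxy, hxC, hyC⟩
  · have hsq' := (h.symm hA).isDirSquare c d hxy
    have hmem := hC.mem_of_isDirSquare hs κ hA hsq' hxC hyC
    exact ⟨d, c, hsq'.arc₃, hmem.1, hmem.2⟩

end IsCollar

namespace IsLeafFold

variable {ι : I → I'} {ρ : I' → I} {z : I'} {a : I} (hf : IsLeafFold H H' ι ρ z a)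
include hf

theorem adj_map {x y : I'} (hxy : H'.Adj x y) : H.Adj (ρ x) (ρ y) := by
  rcases hf.eq_or_mem_range x with rfl | ⟨i, rfl⟩ <;>
    rcases hf.eq_or_mem_range y with rfl | ⟨j, rfl⟩
  · exact absurd hxy H'.irrefl
  · obtain rfl := (hf.adj_leaf_iff j).mp hxy.symm
    simpa only [hf.leftInverse j] using hf.adj_fold.symm
  · obtain rfl := (hf.adj_leaf_iff i).mp hxy
    simpa only [hf.leftInverse i] using hf.adj_fold
  · simpa only [hf.leftInverse i, hf.leftInverse j] using (hf.adj_iff i j).mp hxy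

/-- The retraction of the products with `K` induced by a leaf fold. -/
def boxProdHom (K : SimpleGraph W) : H'.boxProd K →g H.boxProd K where
  toFun := Prod.map ρ id
  map_rel' := Or.imp (And.imp_left hf.adj_map) (And.imp_right (congrArg ρ))

variable {A : I × W → I × W → Prop} {S : Set (I × W)} {σ : Prop}

theorem arcPullback_map (hA : IsOrientation (H.boxProd K) A) {x y : I × W} (hxy : A x y) :
    arcPullback (H'.boxProd K) (hf.boxProdHom K) A (Prod.map ι id x) (Prod.map ι id y) := by
  obtain ⟨i, c⟩ := x
  obtain ⟨j, d⟩ := y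
  refine ⟨(hA.adj hxy).imp (And.imp_left (hf.adj_iff i j).mpr) (And.imp_right (congrArg ι)), ?_⟩
  change A (ρ (ι i), c) (ρ (ι j), d)
  rwa [hf.leftInverse i, hf.leftInverse j]

theorem leftInverse_boxProdHom :
    Function.LeftInverse (hf.boxProdHom K) (Prod.map ι id) :=
  hf.leftInverse.prodMap fun _ => rfl

theorem isCollar_arcPullback {i j : I'} (hij : H'.Adj i j) (h : IsCollar A S σ (ρ i) (ρ j)) :
    IsCollar (arcPullback (H'.boxProd K) (hf.boxProdHom K) A) (hf.boxProdHom K ⁻¹' S) σ i j where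
  isDirSquare c d hcd := by
    have hK : K.Adj c d := SimpleGraph.boxProd_adj_right.mp hcd.1
    exact (h.isDirSquare c d hcd.2).arcPullback hcd.1 (SimpleGraph.boxProd_adj_left.mpr hij)
      (SimpleGraph.boxProd_adj_right.mpr hK.symm) (SimpleGraph.boxProd_adj_left.mpr hij.symm)
  mem_left_iff := h.mem_left_iff
  mem_right_iff := h.mem_right_iff

theorem isCollar_map {i j : I} (hij : H.Adj i j) (h : IsCollar A S σ i j) :
    IsCollar (arcPullback (H'.boxProd K) (hf.boxProdHom K) A) (hf.boxProdHom K ⁻¹' S) σ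
      (ι i) (ι j) :=
  hf.isCollar_arcPullback ((hf.adj_iff i j).mpr hij)
    (by rwa [hf.leftInverse i, hf.leftInverse j])

theorem exists_map_eq {x : I' × W} (hx : x.1 ≠ z) : ∃ u : I × W, Prod.map ι id u = x :=
  let ⟨i, hi⟩ := (hf.eq_or_mem_range x.1).resolve_left hx
  ⟨(i, x.2), Prod.ext hi rfl⟩

theorem adj_leaf_or {x y : I' × W} (hxy : (H'.boxProd K).Adj x y) (hx : x.1 = z) :
    y.1 = ι a ∨ y.1 = z := by
  rcases hxy with ⟨hxy, -⟩ | ⟨-, hxy⟩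
  · rcases hf.eq_or_mem_range y.1 with hy | ⟨i, hi⟩
    · exact Or.inr hy
    · rw [hx, ← hi] at hxy
      exact Or.inl (hi.symm.trans (congrArg ι ((hf.adj_leaf_iff i).mp hxy.symm)))
  · exact Or.inr (hxy.symm.trans hx)

variable (h : IsCollar A S σ a (ρ z))
include h

theorem isCollar_leaf : IsCollar (arcPullback (H'.boxProd K) (hf.boxProdHom K) A)
    (hf.boxProdHom K ⁻¹' S) σ (ι a) z :=
  hf.isCollar_arcPullback ((hf.adj_leaf_iff a).mpr rfl) (by rwa [hf.leftInverse a])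

variable (hA : IsOrientation (H.boxProd K) A) (hK : ∀ c, ∃ d, K.Adj c d)
include hA hK

theorem strongConnected_arcPullback (hs : StrongConnected A) :
    StrongConnected (arcPullback (H'.boxProd K) (hf.boxProdHom K) A) := by
  have hA' := hA.arcPullback (hf.boxProdHom K)
  have hcollar := hf.isCollar_leaf (K := K) h
  have hretract (x : I' × W) : ∃ u : I × W,
      DirReachable (arcPullback (H'.boxProd K) (hf.boxProdHom K) A) x (Prod.map ι id u) ∧
        DirReachable (arcPullback (H'.boxProd K) (hf.boxProdHom K) A) (Prod.map ι id u) x := by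
    by_cases hx : x.1 = z
    · obtain ⟨i, c⟩ := x
      obtain rfl : i = z := hx
      exact ⟨(a, c), (hcollar.symm hA').dirReachable hA' hK c, hcollar.dirReachable hA' hK c⟩
    · obtain ⟨u, rfl⟩ := hf.exists_map_eq hx
      exact ⟨u, .refl _ _, .refl _ _⟩
  intro x y
  obtain ⟨u, hxu, -⟩ := hretract x
  obtain ⟨v, -, hvy⟩ := hretract y
  obtain ⟨k, f, hfw⟩ := hs u v
  exact hxu.trans (.trans ⟨k, _, hfw.map fun x y => hf.arcPullback_map hA⟩ hvy)

variable (hS : IsDominant A S) (κ : (H'.boxProd K).Coloring Bool)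
include hS

theorem dConvex_preimage : DConvex (arcPullback (H'.boxProd K) (hf.boxProdHom K) A)
    (hf.boxProdHom K ⁻¹' S) := by
  refine DConvex.preimage_retraction (fun x y hxy => hxy.2)
    (fun x y hxy => hf.arcPullback_map hA hxy)
    hf.leftInverse_boxProdHom hS.strong (hf.strongConnected_arcPullback h hA hK hS.strong) hS.convex
    fun x y hxy hx hy => by_contra fun hrange => hy ?_
  have hxz : x.1 = z := by_contra fun hxz => hrange (hf.exists_map_eq hxz)
  have hadj : (H'.boxProd K).Adj x y := hxy.elim And.left fun h => h.1.symm
  have hcollar := hf.isCollar_leaf (K := K) h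
  obtain ⟨i, c⟩ := x
  obtain ⟨j, d⟩ := y
  obtain rfl : i = z := hxz
  have hσ : σ := (hcollar.mem_right_iff c).mp hx
  rcases hf.adj_leaf_or hadj rfl with rfl | rfl
  · exact (hcollar.mem_left_iff d).mpr hσ
  · exact (hcollar.mem_right_iff d).mpr hσ

omit hS in
include κ in
theorem exists_arc_map_mem (hs : StrongConnected A) {C : Set (I' × W)}
    (hC : DConvex (arcPullback (H'.boxProd K) (hf.boxProdHom K) A) C) {x y : I' × W}
    (hxy : arcPullback (H'.boxProd K) (hf.boxProdHom K) A x y) (hx : x ∈ C) (hy : y ∈ C)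
    (hxS : hf.boxProdHom K x ∉ S) :
    ∃ u v, A u v ∧ Prod.map ι id u ∈ C ∧ Prod.map ι id v ∈ C ∧ u ∉ S := by
  have hcollar := hf.isCollar_leaf (K := K) h
  have hA' := hA.arcPullback (hf.boxProdHom K)
  have hs' := hf.strongConnected_arcPullback h hA hK hs
  have hnear (hx' : x.1 = ι a ∨ x.1 = z) (hy' : y.1 = ι a ∨ y.1 = z) :
      ∃ u v, A u v ∧ Prod.map ι id u ∈ C ∧ Prod.map ι id v ∈ C ∧ u ∉ S := by
    have hσ : ¬ σ := fun hσ => hxS <| by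
      obtain ⟨i, c⟩ := x
      obtain rfl | rfl : i = ι a ∨ i = z := hx'
      exacts [(hcollar.mem_left_iff c).mpr hσ, (hcollar.mem_right_iff c).mpr hσ]
    obtain ⟨c, d, hcd, hc, hd⟩ :=
      hcollar.exists_arc_left hA' hK κ hs' hC hxy hx hy hx' hy'
    have hcd' : A (ρ (ι a), c) (ρ (ι a), d) := hcd.2
    rw [hf.leftInverse a] at hcd'
    exact ⟨(a, c), (a, d), hcd', hc, hd, fun hcS => hσ ((h.mem_left_iff c).mp hcS)⟩
  by_cases hxz : x.1 = z
  · exact hnear (.inr hxz) (hf.adj_leaf_or hxy.1 hxz)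
  by_cases hyz : y.1 = z
  · exact hnear (hf.adj_leaf_or hxy.1.symm hyz) (.inr hyz)
  obtain ⟨u, rfl⟩ := hf.exists_map_eq hxz
  obtain ⟨v, rfl⟩ := hf.exists_map_eq hyz
  have huv := hxy.2
  rw [hf.leftInverse_boxProdHom u] at hxS huv
  rw [hf.leftInverse_boxProdHom v] at huv
  exact ⟨u, v, huv, hx, hy, hxS⟩

include κ in
theorem isDominant_preimage : IsDominant (arcPullback (H'.boxProd K) (hf.boxProdHom K) A)
    (hf.boxProdHom K ⁻¹' S) := by
  have hA' := hA.arcPullback (hf.boxProdHom K)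
  have hs' := hf.strongConnected_arcPullback h hA hK hS.strong
  have hcollar := hf.isCollar_leaf (K := K) h
  refine ⟨hs', hf.dConvex_preimage h hA hK hS, fun huniv => hS.ne_univ ?_, ?_⟩
  · exact hf.leftInverse_boxProdHom.surjective.preimage_injective huniv
  intro C hC x y hxy hx hy hxS
  obtain ⟨u, v, huv, hu, hv, huS⟩ :=
    hf.exists_arc_map_mem h hA hK κ hS.strong hC hxy hx hy hxS
  have hold : ∀ w : I × W, Prod.map ι id w ∈ C := by
    have huniv := hS.eq_univ _ (hC.preimage_section (fun x y hxy => hxy.2)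
      (fun x y hxy => hf.arcPullback_map hA hxy) hf.leftInverse_boxProdHom hS.strong hs' ⟨u, hu⟩)
      u v huv hu hv huS
    exact Set.eq_univ_iff_forall.mp huniv
  refine Set.eq_univ_of_forall fun w => ?_
  by_cases hw : w.1 = z
  · obtain ⟨i, c⟩ := w
    obtain rfl : i = z := hw
    exact hcollar.mem_right hA' hK κ hs' hC (fun c => hold (a, c)) c
  · obtain ⟨w, rfl⟩ := hf.exists_map_eq hw
    exact hold w

omit h hA hK hS in
theorem ncard_preimage [Finite I] [Finite W] :
    (hf.boxProdHom K ⁻¹' S).ncard = S.ncard + {c | (ρ z, c) ∈ S}.ncard := by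
  have hunion : hf.boxProdHom K ⁻¹' S =
      Prod.map ι id '' S ∪ Prod.mk z '' {c | (ρ z, c) ∈ S} := by
    ext x
    constructor
    · intro hx
      by_cases hxz : x.1 = z
      · obtain ⟨i, c⟩ := x
        obtain rfl : i = z := hxz
        exact .inr ⟨c, hx, rfl⟩
      · obtain ⟨u, rfl⟩ := hf.exists_map_eq hxz
        exact .inl ⟨u, by rwa [Set.mem_preimage, hf.leftInverse_boxProdHom u] at hx, rfl⟩
    · rintro (⟨u, hu, rfl⟩ | ⟨c, hc, rfl⟩)
      · rwa [Set.mem_preimage, hf.leftInverse_boxProdHom u]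
      · exact hc
  have hdisj : Disjoint (Prod.map ι id '' S) (Prod.mk z '' {c | (ρ z, c) ∈ S}) := by
    rw [Set.disjoint_left]
    rintro _ ⟨u, -, rfl⟩ ⟨c, -, hc⟩
    exact hf.ne u.1 (congrArg Prod.fst hc).symm
  rw [hunion, Set.ncard_union_eq hdisj (Set.toFinite _) (Set.toFinite _),
    Set.ncard_image_of_injective _ (hf.leftInverse_boxProdHom (K := K)).injective,
    Set.ncard_image_of_injective _ (Prod.mk_right_injective z)]

end IsLeafFold

end Fold

section GridFold

theorem isLeafFold_pathGraph_succ (n : ℕ) :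
    IsLeafFold (SimpleGraph.pathGraph (n + 2)) (SimpleGraph.pathGraph (n + 3)) Fin.succ
      (Fin.cases 1 id) 0 0 where
  leftInverse _ := rfl
  eq_or_mem_range x := (Fin.eq_zero_or_eq_succ x).imp id fun ⟨i, hi⟩ => ⟨i, hi.symm⟩
  ne := Fin.succ_ne_zero
  adj_iff i j := by simp [SimpleGraph.pathGraph_adj]
  adj_leaf_iff i := by simp [SimpleGraph.pathGraph_adj]
  adj_fold := by simp [SimpleGraph.pathGraph_adj]

theorem isLeafFold_pathGraph_castSucc (n : ℕ) :
    IsLeafFold (SimpleGraph.pathGraph (n + 2)) (SimpleGraph.pathGraph (n + 3)) Fin.castSucc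
      (Fin.lastCases (Fin.last n).castSucc id) (Fin.last (n + 2)) (Fin.last (n + 1)) where
  leftInverse i := by simp
  eq_or_mem_range x := x.lastCases (.inl rfl) fun i => .inr ⟨i, rfl⟩
  ne := Fin.castSucc_ne_last
  adj_iff i j := by simp [SimpleGraph.pathGraph_adj]
  adj_leaf_iff i := by
    simp only [SimpleGraph.pathGraph_adj, Fin.ext_iff, Fin.val_castSucc, Fin.val_last]
    omega
  adj_fold := by simp [SimpleGraph.pathGraph_adj]

/-- Some orientation of `P_n □ P_3` has a dominant set of `k` vertices. If `p` holds, rows `0` and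
`1` form a collar inside that set; if `q` holds, the last two rows form a collar outside it. -/
def GridHasDominant (p q : Prop) (n k : ℕ) : Prop :=
  ∃ A S, IsOrientation (gridGraph n 3) A ∧ IsDominant A S ∧ S.ncard = k ∧
    (p → ∀ a b : Fin n, a.val = 0 → b.val = 1 → IsCollar A S True a b) ∧
    (q → ∀ a b : Fin n, a.val + 1 = n → b.val + 2 = n → IsCollar A S False a b)

namespace GridHasDominant

variable {p q : Prop} {n k : ℕ}

theorem mem_strongConvexitySpectrum (h : GridHasDominant p q n k) :
    k ∈ strongConvexitySpectrum (gridGraph n 3) := by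
  obtain ⟨A, S, hA, hS, rfl, -⟩ := h
  exact ⟨A, hA, hS.strong, hS.convexityNumber_eq⟩

theorem add_inner_row (hn : 2 ≤ n) (h : GridHasDominant True q n k) :
    GridHasDominant True q (n + 1) (k + 3) := by
  obtain ⟨n, rfl⟩ := Nat.exists_eq_add_of_le' hn
  obtain ⟨A, S, hA, hS, rfl, hp, hq⟩ := h
  have hf := isLeafFold_pathGraph_succ n
  have hcollar : IsCollar A S True 0 1 := hp trivial 0 1 rfl rfl
  refine ⟨_, _, hA.arcPullback (hf.boxProdHom _), hf.isDominant_preimage hcollar hA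
    (exists_pathGraph_adj (by norm_num)) hS (gridColoring _ _), ?_, fun _ a b ha hb => ?_,
    fun hq' a b ha hb => ?_⟩
  · have hfull : {c : Fin 3 | (1, c) ∈ S} = Set.univ :=
      Set.eq_univ_of_forall fun c => (hcollar.mem_right_iff c).mpr trivial
    rw [hf.ncard_preimage]
    simp [hfull]
  · obtain rfl : a = 0 := Fin.ext ha
    obtain rfl : b = Fin.succ 0 := Fin.ext hb
    exact (hf.isCollar_leaf hcollar).symm (hA.arcPullback (hf.boxProdHom _))
  · obtain ⟨a, rfl⟩ := Fin.exists_succ_eq.mpr (show a ≠ 0 by rintro rfl; simp at ha)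
    obtain ⟨b, rfl⟩ := Fin.exists_succ_eq.mpr (show b ≠ 0 by rintro rfl; simp at hb)
    rw [Fin.val_succ] at ha hb
    exact hf.isCollar_map (SimpleGraph.pathGraph_adj.mpr (by omega))
      (hq hq' a b (by omega) (by omega))

theorem add_outer_row (hn : 2 ≤ n) (h : GridHasDominant p True n k) :
    GridHasDominant p True (n + 1) k := by
  obtain ⟨n, rfl⟩ := Nat.exists_eq_add_of_le' hn
  obtain ⟨A, S, hA, hS, rfl, hp, hq⟩ := h
  have hf := isLeafFold_pathGraph_castSucc n
  have hfold : Fin.lastCases (Fin.last n).castSucc id (Fin.last (n + 2)) = (Fin.last n).castSucc :=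
    Fin.lastCases_last
  have hcollar := hq trivial (Fin.last (n + 1)) _ rfl (congrArg (·.val + 2) hfold)
  refine ⟨_, _, hA.arcPullback (hf.boxProdHom _), hf.isDominant_preimage hcollar hA
    (exists_pathGraph_adj (by norm_num)) hS (gridColoring _ _), ?_, fun hp' a b ha hb => ?_,
    fun _ a b ha hb => ?_⟩
  · have hempty : {c : Fin 3 | (Fin.lastCases (Fin.last n).castSucc id (Fin.last (n + 2)), c) ∈ S} =
        ∅ := Set.eq_empty_of_forall_notMem fun c => (hcollar.mem_right_iff c).mp
    rw [hf.ncard_preimage, hempty, Set.ncard_empty, add_zero]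
  · obtain ⟨a, rfl⟩ := Fin.exists_castSucc_eq.mpr (show a ≠ Fin.last _ by rintro rfl; simp at ha)
    obtain ⟨b, rfl⟩ := Fin.exists_castSucc_eq.mpr (show b ≠ Fin.last _ by rintro rfl; simp at hb)
    exact hf.isCollar_map (SimpleGraph.pathGraph_adj.mpr (.inl (by simp_all))) (hp hp' a b ha hb)
  · obtain rfl : a = Fin.last _ := Fin.ext (Nat.succ_injective ha)
    obtain rfl : b = (Fin.last _).castSucc := Fin.ext (Nat.succ_injective (Nat.succ_injective hb))
    exact (hf.isCollar_leaf hcollar).symm (hA.arcPullback (hf.boxProdHom _))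

theorem add_inner_rows (hn : 2 ≤ n) (h : GridHasDominant True q n k) (j : ℕ) :
    GridHasDominant True q (n + j) (k + 3 * j) := by
  induction j with
  | zero => exact h
  | succ j ih => exact ih.add_inner_row (Nat.le_add_right_of_le hn)

theorem add_outer_rows (hn : 2 ≤ n) (h : GridHasDominant p True n k) (j : ℕ) :
    GridHasDominant p True (n + j) k := by
  induction j with
  | zero => exact h
  | succ j ih => exact ih.add_outer_row (Nat.le_add_right_of_le hn)

end GridHasDominant

end GridFold

section Certificate

variable {A : V → V → Prop} {d : V → V → ℕ}

/-- A recursive characterization of the distance function of a strongly connected digraph, which is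
decidable on a finite vertex set. -/
def IsDistance (A : V → V → Prop) (d : V → V → ℕ) : Prop :=
  (∀ v, d v v = 0) ∧ (∀ u v, A u v → ∀ w, d u w ≤ d v w + 1) ∧
    ∀ u w, u ≠ w → ∃ v, A u v ∧ d v w + 1 = d u w

instance [Fintype V] [DecidableEq V] [DecidableRel A] : Decidable (IsDistance A d) :=
  inferInstanceAs (Decidable (_ ∧ _))

namespace IsDistance

variable (hd : IsDistance A d)
include hd

theorem exists_isDirWalk (u w : V) : ∃ f, IsDirWalk A (d u w) f u w := by
  induction hk : d u w generalizing u with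
  | zero =>
    obtain rfl : u = w := by_contra fun huw => by
      obtain ⟨v, -, hv⟩ := hd.2.2 u w huw
      omega
    exact ⟨_, isDirWalk_refl A u⟩
  | succ k ih =>
    obtain ⟨v, huv, hv⟩ := hd.2.2 u w fun huw => by
      rw [huw, hd.1] at hk
      omega
    obtain ⟨f, hf⟩ := ih v (by omega)
    exact ⟨_, hf.cons huv⟩

theorem le_of_isDirWalk {k : ℕ} {f : ℕ → V} {u w : V} (hf : IsDirWalk A k f u w) : d u w ≤ k := by
  induction k generalizing u f with
  | zero => rw [← hf.1, hf.2.1, hd.1]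
  | succ k ih => exact (hd.2.1 _ _ hf.tail.1 w).trans (Nat.add_le_add_right (ih hf.tail.2) 1)

theorem strongConnected : StrongConnected A :=
  fun u w => ⟨_, hd.exists_isDirWalk u w⟩

theorem dirDist_eq (u w : V) : dirDist A u w = d u w := by
  obtain ⟨f, hf⟩ := hd.exists_isDirWalk u w
  obtain ⟨g, hg⟩ := hd.strongConnected.exists_isDirWalk_dirDist u w
  exact le_antisymm hf.dirDist_le (hd.le_of_isDirWalk hg)

theorem dConvex_iff {C : Set V} : DConvex A C ↔
    C.Nonempty ∧ ∀ u ∈ C, ∀ v ∈ C, ∀ x, d u x + d x v = d u v → x ∈ C := by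
  simpa only [hd.dirDist_eq] using hd.strongConnected.dConvex_iff

end IsDistance

/-- Adds `x` to `C` if it lies between two members of `C` for the distance `d`. -/
def insertBetween (d : V → V → ℕ) (C : List V) (x : V) : List V :=
  bif C.any (fun u => d u x == 0) then C
  else bif C.any (fun u => C.any fun v => d u x + d x v == d u v) then x :: C else C

/-- The members of `C` together with vertices of `l` that belong to the convex hull of `C`, found in
`k` sweeps over `l`. -/
def hullSweep (d : V → V → ℕ) (l : List V) (k : ℕ) (C : List V) : List V :=
  (List.foldl (insertBetween d) · l)^[k] C

theorem IsDistance.mem_of_mem_hullSweep (hd : IsDistance A d) {C : Set V} (hC : DConvex A C)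
    {l L : List V} {k : ℕ} (hL : ∀ x ∈ L, x ∈ C) : ∀ x ∈ hullSweep d l k L, x ∈ C := by
  have hinsert (L : List V) (y : V) (hL : ∀ x ∈ L, x ∈ C) : ∀ x ∈ insertBetween d L y, x ∈ C := by
    grind [insertBetween, hd.dConvex_iff]
  have hfold (l L : List V) (hL : ∀ x ∈ L, x ∈ C) : ∀ x ∈ l.foldl (insertBetween d) L, x ∈ C := by
    induction l generalizing L with
    | nil => exact hL
    | cons y _ ih => exact ih _ (hinsert L y hL)
  induction k generalizing L with
  | zero => exact hL
  | succ _ ih => exact ih (hfold l L hL)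

theorem IsDistance.isDominant (hd : IsDistance A d) {S : Set V} {l : List V} {k : ℕ}
    (hne : S.Nonempty) (huniv : ∃ x, x ∉ S)
    (hconv : ∀ u ∈ S, ∀ v ∈ S, ∀ x, d u x + d x v = d u v → x ∈ S)
    (hhull : ∀ x y, A x y → x ∉ S → ∀ w, w ∈ hullSweep d l k [x, y]) : IsDominant A S where
  strong := hd.strongConnected
  convex := hd.dConvex_iff.mpr ⟨hne, hconv⟩
  ne_univ := (Set.ne_univ_iff_exists_notMem S).mpr huniv
  eq_univ C hC x y hxy hx hy hxS := Set.eq_univ_of_forall fun w =>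
    hd.mem_of_mem_hullSweep hC (by simp [hx, hy]) w (hhull x y hxy hxS w)

end Certificate

section GridTable

variable {n m : ℕ}

/-- The arcs of the orientation of `P_n □ P_m` encoded by two tables of bits: the bit `i, j` of `h`
directs the edge between `(i, j)` and `(i, j + 1)`, and that of `v` the edge between `(i, j)` and
`(i + 1, j)`, where `1` means away from `(i, j)`. -/
def tableArc (h v : List (List ℕ)) (x y : Fin n × Fin m) : Bool :=
  x.1 == y.1 && (x.2.val + 1 == y.2.val && (h.getD x.1 []).getD x.2 0 == 1 ||
    y.2.val + 1 == x.2.val && (h.getD y.1 []).getD y.2 0 != 1) ||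
  x.2 == y.2 && (x.1.val + 1 == y.1.val && (v.getD x.1 []).getD x.2 0 == 1 ||
    y.1.val + 1 == x.1.val && (v.getD y.1 []).getD y.2 0 != 1)

theorem isOrientation_tableArc (h v : List (List ℕ)) :
    IsOrientation (gridGraph n m) fun x y => tableArc h v x y := by
  refine ⟨fun x y => ?_, fun x y => ?_, fun x y => ?_⟩ <;>
    grind [tableArc, gridGraph_adj]

/-- The vertices of `P_n □ P_m` in lexicographic order. -/
def gridCells (n m : ℕ) : List (Fin n × Fin m) :=
  List.finRange n ×ˢ List.finRange m

/-- One sweep of Bellman-Ford relaxations over the arcs `E`. The distances from a fixed vertex are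
stored as the base `32` digits of `R`, so that the kernel evaluates it with fast arithmetic of
natural numbers; a digit `31` stands for an infinite distance. -/
def relaxSweep (E : List (ℕ × ℕ)) (R : ℕ) : ℕ :=
  E.foldl (fun R e =>
    let s := R / 32 ^ e.1 % 32
    let t := R / 32 ^ e.2 % 32
    if s + 1 < t then R - (t - (s + 1)) * 32 ^ e.2 else R) R

/-- At most `k` relaxation sweeps, stopping as soon as one of them changes nothing. -/
def relax (E : List (ℕ × ℕ)) : ℕ → ℕ → ℕ
  | 0, R => R
  | k + 1, R => let R' := relaxSweep E R; if R' = R then R else relax E k R'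

/-- The distances of `tableArc h v`, where the entry `m * i + j` encodes those from `(i, j)`. -/
def tableDistRows (h v : List (List ℕ)) (n m : ℕ) : List ℕ :=
  let code (x : Fin n × Fin m) : ℕ := m * x.1 + x.2
  let E := (gridCells n m).flatMap fun x =>
    ((gridCells n m).filter (tableArc h v x)).map fun y => (code x, code y)
  (List.range (n * m)).map fun u => relax E (n * m) (32 ^ (n * m) - 1 - 31 * 32 ^ u)

/-- The distance function of `tableArc h v` as computed by Bellman-Ford relaxation; its correctness
is certified by `IsDistance`. -/
def tableDist (h v : List (List ℕ)) (x y : Fin n × Fin m) : ℕ :=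
  (tableDistRows h v n m).getD (m * x.1 + x.2) 0 / 32 ^ (m * y.1 + y.2 : ℕ) % 32

theorem GridHasDominant.of_table {p q : Prop} {k : ℕ} (h v : List (List ℕ))
    (S : Set (Fin n × Fin 3)) [DecidablePred (· ∈ S)]
    (hd : IsDistance (fun x y => tableArc h v x y) (tableDist h v : Fin n × Fin 3 → _ → ℕ) := by
      decide +kernel)
    (hne : ∃ x, x ∈ S := by decide +kernel) (huniv : ∃ x, x ∉ S := by decide +kernel)
    (hconv : ∀ x ∈ S, ∀ y ∈ S, ∀ w, tableDist h v x w + tableDist h v w y = tableDist h v x y →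
      w ∈ S := by decide +kernel)
    (hhull : ∀ x y, tableArc h v x y → x ∉ S →
      ∀ w, w ∈ hullSweep (tableDist h v) (gridCells n 3) n [x, y] := by decide +kernel)
    (hcard : (Finset.univ.filter (· ∈ S)).card = k := by decide +kernel)
    (hp : p → ∀ a b : Fin n, a.val = 0 → b.val = 1 →
      IsCollar (fun x y => tableArc h v x y) S True a b := by decide +kernel)
    (hq : q → ∀ a b : Fin n, a.val + 1 = n → b.val + 2 = n →
      IsCollar (fun x y => tableArc h v x y) S False a b := by decide +kernel) :
    GridHasDominant p q n k := by
  refine ⟨_, S, isOrientation_tableArc h v, hd.isDominant hne huniv hconv hhull, ?_, hp, hq⟩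
  rw [← hcard, ← Set.ncard_coe_finset, Finset.coe_filter_univ]
  rfl

end GridTable

section Bases

theorem gridHasDominant_three_one : GridHasDominant False True 3 1 :=
  .of_table [[1, 0], [0, 1], [1, 0]] [[0, 1, 0], [1, 0, 1]] {x | x.1.val = 0 ∧ x.2.val = 0}

theorem gridHasDominant_four_four : GridHasDominant False True 4 4 :=
  .of_table [[1, 0], [0, 0], [1, 0], [0, 1]] [[0, 1, 0], [1, 1, 0], [0, 1, 0]]
    {x | x.1.val < 2 ∧ x.2.val < 2}

theorem gridHasDominant_three_six : GridHasDominant True False 3 6 :=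
  .of_table [[1, 0], [0, 1], [0, 1]] [[0, 1, 0], [0, 1, 0]] {x | x.1.val < 2}

theorem gridHasDominant_four_six : GridHasDominant True False 4 6 :=
  .of_table [[1, 0], [0, 1], [0, 1], [0, 0]] [[0, 1, 0], [0, 1, 0], [0, 1, 1]] {x | x.1.val < 2}

theorem gridHasDominant_five_six : GridHasDominant True True 5 6 :=
  .of_table [[1, 0], [0, 1], [0, 0], [1, 0], [0, 1]] [[0, 1, 0], [0, 1, 0], [1, 1, 0], [0, 1, 0]]
    {x | x.1.val < 2}

theorem gridHasDominant_four_eight : GridHasDominant True False 4 8 :=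
  .of_table [[1, 0], [0, 1], [1, 0], [1, 1]] [[0, 1, 0], [1, 0, 0], [1, 0, 0]]
    {x | x.1.val < 2 ∨ x.1.val < 3 ∧ x.2.val < 2}

theorem gridHasDominant_five_eight : GridHasDominant True True 5 8 :=
  .of_table [[1, 0], [0, 1], [1, 1], [1, 0], [0, 1]] [[0, 1, 0], [1, 0, 1], [0, 1, 1], [0, 1, 0]]
    {x | x.1.val < 2 ∨ x.1.val < 3 ∧ x.2.val < 2}

theorem gridHasDominant_five_ten : GridHasDominant True False 5 10 :=
  .of_table [[1, 0], [0, 1], [1, 0], [1, 0], [1, 1]] [[0, 1, 0], [1, 0, 0], [1, 0, 0], [1, 0, 0]]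
    {x | x.1.val < 2 ∨ x.1.val < 4 ∧ x.2.val < 2}

theorem gridHasDominant_six_ten : GridHasDominant True True 6 10 :=
  .of_table [[1, 0], [0, 1], [1, 0], [0, 0], [1, 0], [0, 1]]
    [[0, 1, 0], [1, 0, 0], [0, 1, 0], [1, 1, 0], [0, 1, 0]]
    {x | x.1.val < 2 ∨ x.1.val < 4 ∧ x.2.val < 2}

end Bases

section Spectrum

/-- In `P_3 □ P_3` the value `4` is attained by two convex squares that share one vertex; any two
vertices not in a common square have the whole grid as their convex hull. -/
theorem four_mem_strongConvexitySpectrum_gridGraph_three :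
    4 ∈ strongConvexitySpectrum (gridGraph 3 3) := by
  let h := [[1, 1], [0, 1], [0, 0]]
  let v := [[0, 1, 1], [0, 0, 1]]
  let S : Set (Fin 3 × Fin 3) := {x | x.1.val < 2 ∧ x.2.val < 2}
  let T : Set (Fin 3 × Fin 3) := {x | 0 < x.1.val ∧ 0 < x.2.val}
  have hd : IsDistance (fun x y : Fin 3 × Fin 3 => tableArc h v x y) (tableDist h v) := by
    decide +kernel
  have hconv : ∀ x ∈ S, ∀ y ∈ S, ∀ w,
      tableDist h v x w + tableDist h v w y = tableDist h v x y → w ∈ S := by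
    decide +kernel
  have hpair : ∀ x y : Fin 3 × Fin 3, x ≠ y →
      (∀ w, w ∈ hullSweep (tableDist h v) (gridCells 3 3) 3 [x, y]) ∨
        x ∈ S ∧ y ∈ S ∨ x ∈ T ∧ y ∈ T := by
    decide +kernel
  have hScard : S.ncard = 4 := by
    rw [Set.ncard_eq_toFinset_card']
    decide +kernel
  have hTcard : T.ncard = 4 := by
    rw [Set.ncard_eq_toFinset_card']
    decide +kernel
  have hS : DConvex (fun x y : Fin 3 × Fin 3 => tableArc h v x y) S :=
    hd.dConvex_iff.mpr ⟨⟨(0, 0), by decide +kernel⟩, hconv⟩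
  have hSne : S ≠ Set.univ := (Set.ne_univ_iff_exists_notMem S).mpr ⟨(2, 2), by decide +kernel⟩
  refine ⟨_, isOrientation_tableArc h v, hd.strongConnected, ?_⟩
  rw [← hScard]
  refine hS.convexityNumber_eq_of_pair hSne (hTcard.trans_le hScard.ge)
    fun C hC x hx y hy hxy => (hpair x y hxy).imp_left fun hfull => ?_
  exact Set.eq_univ_of_forall fun w => hd.mem_of_mem_hullSweep hC (by simp [hx, hy]) w (hfull w)

theorem one_mem_strongConvexitySpectrum_gridGraph {n : ℕ} (hn : 3 ≤ n) :
    1 ∈ strongConvexitySpectrum (gridGraph n 3) := by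
  obtain ⟨e, rfl⟩ := Nat.exists_eq_add_of_le hn
  exact (gridHasDominant_three_one.add_outer_rows (by norm_num) e).mem_strongConvexitySpectrum

theorem four_mem_strongConvexitySpectrum_gridGraph {n : ℕ} (hn : 3 ≤ n) :
    4 ∈ strongConvexitySpectrum (gridGraph n 3) := by
  obtain rfl | hn := hn.eq_or_lt
  · exact four_mem_strongConvexitySpectrum_gridGraph_three
  obtain ⟨e, rfl⟩ := Nat.exists_eq_add_of_le hn
  exact (gridHasDominant_four_four.add_outer_rows (by norm_num) e).mem_strongConvexitySpectrum

theorem six_add_mem_strongConvexitySpectrum_gridGraph {n j : ℕ} (hn : 3 + j ≤ n) :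
    6 + 3 * j ∈ strongConvexitySpectrum (gridGraph n 3) := by
  obtain rfl | rfl | ⟨e, rfl⟩ : n = 3 + j ∨ n = 4 + j ∨ ∃ e, n = 5 + e + j := by
    obtain ⟨_ | _ | e, rfl⟩ := Nat.exists_eq_add_of_le hn <;> grind
  · exact (gridHasDominant_three_six.add_inner_rows (by norm_num) j).mem_strongConvexitySpectrum
  · exact (gridHasDominant_four_six.add_inner_rows (by norm_num) j).mem_strongConvexitySpectrum
  · exact ((gridHasDominant_five_six.add_outer_rows (by norm_num) e).add_inner_rows
      (by omega) j).mem_strongConvexitySpectrum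

theorem eight_add_mem_strongConvexitySpectrum_gridGraph {n j : ℕ} (hn : 4 + j ≤ n) :
    8 + 3 * j ∈ strongConvexitySpectrum (gridGraph n 3) := by
  obtain rfl | ⟨e, rfl⟩ : n = 4 + j ∨ ∃ e, n = 5 + e + j := by
    obtain ⟨_ | e, rfl⟩ := Nat.exists_eq_add_of_le hn <;> grind
  · exact (gridHasDominant_four_eight.add_inner_rows (by norm_num) j).mem_strongConvexitySpectrum
  · exact ((gridHasDominant_five_eight.add_outer_rows (by norm_num) e).add_inner_rows
      (by omega) j).mem_strongConvexitySpectrum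

theorem ten_add_mem_strongConvexitySpectrum_gridGraph {n j : ℕ} (hn : 5 + j ≤ n) :
    10 + 3 * j ∈ strongConvexitySpectrum (gridGraph n 3) := by
  obtain rfl | ⟨e, rfl⟩ : n = 5 + j ∨ ∃ e, n = 6 + e + j := by
    obtain ⟨_ | e, rfl⟩ := Nat.exists_eq_add_of_le hn <;> grind
  · exact (gridHasDominant_five_ten.add_inner_rows (by norm_num) j).mem_strongConvexitySpectrum
  · exact ((gridHasDominant_six_ten.add_outer_rows (by norm_num) e).add_inner_rows
      (by omega) j).mem_strongConvexitySpectrum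

theorem subset_strongConvexitySpectrum_gridGraph {n : ℕ} (hn : 3 ≤ n) :
    {k | 1 ≤ k ∧ k ≤ 3 * n - 3} \ {2, 3, 5, 7} ⊆ strongConvexitySpectrum (gridGraph n 3) := by
  rintro k ⟨⟨hk₁, hk⟩, hk'⟩
  simp only [Set.mem_insert_iff, Set.mem_singleton_iff, not_or] at hk'
  obtain rfl | rfl | ⟨j, rfl | rfl | rfl⟩ :
      k = 1 ∨ k = 4 ∨ ∃ j, k = 6 + 3 * j ∨ k = 8 + 3 * j ∨ k = 10 + 3 * j := by
    by_cases hk6 : k < 6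
    · omega
    · obtain hmod | hmod | hmod : k % 3 = 0 ∨ k % 3 = 2 ∨ k % 3 = 1 := by omega
      · exact .inr (.inr ⟨(k - 6) / 3, by omega⟩)
      · exact .inr (.inr ⟨(k - 8) / 3, by omega⟩)
      · exact .inr (.inr ⟨(k - 10) / 3, by omega⟩)
  · exact one_mem_strongConvexitySpectrum_gridGraph hn
  · exact four_mem_strongConvexitySpectrum_gridGraph hn
  · exact six_add_mem_strongConvexitySpectrum_gridGraph (by omega)
  · exact eight_add_mem_strongConvexitySpectrum_gridGraph (by omega)
  · exact ten_add_mem_strongConvexitySpectrum_gridGraph (by omega)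

end Spectrum

/-- The strong convexity spectrum of the grid `P_n □ P_3`. -/
theorem strongConvexitySpectrum_grid_n3 (n : ℕ) (hn : 3 ≤ n) :
    strongConvexitySpectrum (gridGraph n 3) =
      {k : ℕ | 1 ≤ k ∧ k ≤ 3 * n - 3} \ {2, 3, 5, 7} := by
  apply Set.Subset.antisymm
  · exact strongConvexitySpectrum_gridGraph_subset hn
  · exact subset_strongConvexitySpectrum_gridGraph hn
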